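/- arXiv:1502.03341 — 5 statements merged into one kernel-verified Lean document; each statement's English description precedes it below -/
import Mathlib

section
/- Let p be a prime, n a positive integer. Let g = X^n − 1 ∈ F_p[X] and let f ∈ F_p[X] be a primitive polynomial of degree n. Then the subgroup of GL_n(F_p) generated by the companion matrices C_f and C_g equals GL_n(F_p). -/
open Polynomial Matrix
open scoped MatrixGroups

/-- The companion matrix of a polynomial `f` of degree `n`: entries `1` on the
subdiagonal, last column `(-a_0, …, -a_{n-1})ᵀ`, and `0` elsewhere. -/
def companionMatrix {F : Type} [Field F] (n : ℕ) (f : Polynomial F) :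
    Matrix (Fin n) (Fin n) F :=
  Matrix.of fun i j =>
    if (j : ℕ) = n - 1 then -f.coeff (i : ℕ)
    else if (i : ℕ) = (j : ℕ) + 1 then 1 else 0

/-- `f` is a primitive polynomial of degree `n` over the finite field `F`:
`f` is monic irreducible of degree `n` and the image of `X` in `F[X]/(f)` is a
unit generating the whole unit group. -/
def IsPrimitivePoly {F : Type} [Field F] (f : Polynomial F) (n : ℕ) : Prop :=
  f.Monic ∧ f.natDegree = n ∧ Irreducible f ∧
    ∃ u : (AdjoinRoot f)ˣ, (u : AdjoinRoot f) = AdjoinRoot.root f ∧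
      ∀ v : (AdjoinRoot f)ˣ, v ∈ Subgroup.zpowers u


lemma zmod_two_aux : ∀ z : ZMod 2, z ≠ 0 → z = 1 := by decide

section abstract_part
variable {p : ℕ} [Fact p.Prime] {L : Type} [Field L] [Algebra (ZMod p) L]
  {Γ : Type} [Group Γ]

/-- Some element of the group acts as `x ↦ x + φ x • u`. -/
def HasT (ρ : Γ →* Module.End (ZMod p) L) (φ : L →ₗ[ZMod p] ZMod p) (u : L) : Prop :=
  ∃ g : Γ, ∀ x, ρ g x = x + φ x • u

/-- All multiplications are in the group. -/
def HasMul (ρ : Γ →* Module.End (ZMod p) L) : Prop :=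
  ∀ c : L, c ≠ 0 → ∃ g : Γ, ∀ x, ρ g x = c * x

variable {ρ : Γ →* Module.End (ZMod p) L}

lemma rho_inv_apply (g : Γ) (x : L) : ρ g⁻¹ (ρ g x) = x := by
  rw [← Module.End.mul_apply, ← map_mul]; simp

lemma rho_apply_inv (g : Γ) (x : L) : ρ g (ρ g⁻¹ x) = x := by
  rw [← Module.End.mul_apply, ← map_mul]; simp

lemma HasT.sub {φ ψ : L →ₗ[ZMod p] ZMod p} {u : L} (h1 : HasT ρ φ u) (h2 : HasT ρ ψ u)
    (h : φ u = ψ u) : HasT ρ (φ - ψ) u := by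
  obtain ⟨g, hg⟩ := h1
  obtain ⟨k, hk⟩ := h2
  refine ⟨g * k⁻¹, fun y => ?_⟩
  obtain ⟨x, rfl⟩ : ∃ x, y = ρ k x := ⟨ρ k⁻¹ y, (rho_apply_inv k y).symm⟩
  rw [map_mul, Module.End.mul_apply, rho_inv_apply, hg, hk]
  simp only [LinearMap.sub_apply, map_add, map_smul, h, smul_eq_mul]
  module

lemma HasT.zero (u : L) : HasT ρ 0 u := ⟨1, by simp⟩

lemma HasT.conj {φ : L →ₗ[ZMod p] ZMod p} {u : L} (h : HasT ρ φ u) (g : Γ) :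
    HasT ρ (φ ∘ₗ ρ g⁻¹) (ρ g u) := by
  obtain ⟨k, hk⟩ := h
  refine ⟨g * k * g⁻¹, fun y => ?_⟩
  rw [map_mul, map_mul, Module.End.mul_apply, Module.End.mul_apply, hk, map_add, rho_apply_inv]
  simp

lemma HasT.cmul (hm : HasMul ρ) {φ : L →ₗ[ZMod p] ZMod p} {u : L} (h : HasT ρ φ u) {c : L}
    (hc : c ≠ 0) : HasT ρ (φ ∘ₗ LinearMap.mulLeft (ZMod p) c⁻¹) (c * u) := by
  obtain ⟨g, hg⟩ := hm c hc
  have := h.conj g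
  rw [hg] at this
  convert this using 2
  ext x
  apply (Function.LeftInverse.injective (rho_inv_apply (ρ := ρ) g))
  rw [rho_apply_inv, hg]
  simp [hc]

lemma HasT.smul {φ : L →ₗ[ZMod p] ZMod p} {u : L} (h : HasT ρ φ u) (hu : φ u = 0) (k : ZMod p) :
    HasT ρ (k • φ) u := by
  obtain ⟨m, rfl⟩ := ZMod.natCast_zmod_surjective k
  have key : ∀ m : ℕ, HasT ρ ((-(m : ZMod p)) • φ) u := by
    intro m
    induction m with
    | zero => simpa using HasT.zero u
    | succ m ih =>
      have := ih.sub h (by simp [hu])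
      convert this using 1
      push_cast
      module
  have := (HasT.zero u).sub (key m) (by simp [hu])
  convert this using 1
  module

lemma exists_transvection (hm : HasMul ρ) {φ : L →ₗ[ZMod p] ZMod p} {u : L} (h : HasT ρ φ u)
    (hφ : φ ≠ 0) (hu : u ≠ 0) (γ : L) (hγ : ∀ k, γ ≠ algebraMap (ZMod p) L k)
    (hγ2 : ∀ a b : ZMod p, γ ^ 2 = algebraMap _ L a * γ + algebraMap _ L b → p ≠ 2 → φ u ≠ -2) :
    ∃ ψ : L →ₗ[ZMod p] ZMod p, ∃ v, ψ ≠ 0 ∧ v ≠ 0 ∧ ψ v = 0 ∧ HasT ρ ψ v := by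
  by_contra! hno
  -- normalise
  wlog hu1 : u = 1 generalizing φ u
  · refine this (φ := φ ∘ₗ LinearMap.mulLeft (ZMod p) u) (u := 1) ?_ ?_ one_ne_zero ?_ rfl
    · have := h.cmul hm (inv_ne_zero hu)
      simpa [hu] using this
    · intro h0
      apply hφ
      ext x
      have := LinearMap.congr_fun h0 (u⁻¹ * x)
      simpa [hu] using this
    · simpa using hγ2
  subst hu1
  have hφ1 : φ 1 ≠ 0 := fun h0 => hno φ 1 hφ one_ne_zero h0 h
  obtain ⟨g, hg⟩ := id h
  have inj : Function.Injective (ρ g) := Function.LeftInverse.injective (rho_inv_apply g)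
  have key : ∀ c : L, c ≠ 0 → ∃ κ : ZMod p,
      algebraMap _ L (φ c) = algebraMap _ L κ * c * (c + algebraMap _ L (φ c)) := by
    intro c hc
    set e := c + algebraMap _ L (φ c) with he
    have hge : ρ g c = e := by rw [hg, he, Algebra.algebraMap_eq_smul_one]
    have he0 : e ≠ 0 := by
      rw [← hge]; intro h0; exact hc (inj (by simpa using h0))
    have h1 := (h.cmul hm hc).conj g
    have h2 := h.cmul hm he0
    rw [mul_one, hge] at h1
    rw [mul_one] at h2
    have hv : (φ ∘ₗ LinearMap.mulLeft (ZMod p) c⁻¹ ∘ₗ ρ g⁻¹) e =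
        (φ ∘ₗ LinearMap.mulLeft (ZMod p) e⁻¹) e := by
      simp only [LinearMap.comp_apply, LinearMap.mulLeft_apply]
      rw [← hge, rho_inv_apply, hge, inv_mul_cancel₀ hc, inv_mul_cancel₀ he0]
    have h3 := h1.sub h2 hv
    have h4 : φ ∘ₗ LinearMap.mulLeft (ZMod p) c⁻¹ ∘ₗ ρ g⁻¹ =
        φ ∘ₗ LinearMap.mulLeft (ZMod p) e⁻¹ := by
      by_contra hne
      refine hno _ e (sub_ne_zero.mpr hne) he0 ?_ h3
      rw [LinearMap.sub_apply, sub_eq_zero]; exact hv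
    refine ⟨φ e⁻¹, ?_⟩
    have h5 : ∀ x, φ ((c⁻¹ - e⁻¹ - algebraMap _ L (φ e⁻¹)) * x) = 0 := by
      intro x
      have := LinearMap.congr_fun h4 (ρ g x)
      simp only [LinearMap.comp_apply, LinearMap.mulLeft_apply, rho_inv_apply] at this
      rw [hg, mul_add, map_add, mul_smul_comm, map_smul, mul_one] at this
      rw [sub_mul, sub_mul, map_sub, map_sub, this, ← Algebra.smul_def, map_smul]
      simp only [smul_eq_mul]; ring
    have h6 : c⁻¹ - e⁻¹ - algebraMap _ L (φ e⁻¹) = 0 := by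
      by_contra hne
      apply hφ
      ext x
      have := h5 ((c⁻¹ - e⁻¹ - algebraMap _ L (φ e⁻¹))⁻¹ * x)
      rwa [mul_inv_cancel_left₀ hne] at this
    have h7 : algebraMap _ L (φ e⁻¹) = c⁻¹ - e⁻¹ := by linear_combination -h6
    have h8 : algebraMap _ L (φ c) = e - c := by rw [he]; ring
    rw [h7, h8]
    field_simp
  have key2 : ∀ s : ZMod p, φ γ + s * φ 1 ≠ 0 → ∃ b : ZMod p, γ ^ 2 =
      algebraMap _ L (-(φ γ + s * φ 1 + 2 * s)) * γ + algebraMap _ L b := by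
    intro s hs
    have hc : γ + algebraMap _ L s ≠ 0 := by
      intro h0
      exact hγ (-s) (by rw [map_neg]; linear_combination h0)
    have hτ : φ (γ + algebraMap _ L s) = φ γ + s * φ 1 := by
      rw [map_add, Algebra.algebraMap_eq_smul_one, map_smul, smul_eq_mul]
    obtain ⟨κ, hκ⟩ := key _ hc
    rw [hτ] at hκ
    generalize φ γ + s * φ 1 = τ at *
    have hκ0 : κ ≠ 0 := by
      rintro rfl
      simp at hκ
      exact hs hκ
    have hκ1 : algebraMap _ L κ ≠ 0 := by simpa using hκ0
    refine ⟨τ * κ⁻¹ - τ * s - s ^ 2, ?_⟩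
    simp only [map_neg, map_add, map_sub, map_mul, map_pow, map_inv₀, map_ofNat]
    field_simp
    linear_combination -hκ
  by_cases hq : ∃ a b : ZMod p, γ ^ 2 = algebraMap _ L a * γ + algebraMap _ L b
  · obtain ⟨a, b, hab⟩ := hq
    have key3 : ∀ s : ZMod p, (φ γ + s * φ 1) * (φ γ + s * φ 1 + 2 * s + a) = 0 := by
      intro s
      by_cases hs : φ γ + s * φ 1 = 0
      · simp [hs]
      · obtain ⟨b', hb'⟩ := key2 s hs
        have h9 : algebraMap _ L (φ γ + s * φ 1 + 2 * s + a) * γ = algebraMap _ L (b' - b) := by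
          simp only [map_neg, map_add, map_sub, map_mul, map_ofNat] at *
          linear_combination hb' - hab
        have h10 : φ γ + s * φ 1 + 2 * s + a = 0 := by
          by_contra hne
          have hne' : algebraMap _ L (φ γ + s * φ 1 + 2 * s + a) ≠ 0 :=
            fun h0 => hne ((map_eq_zero _).mp h0)
          apply hγ ((b' - b) / (φ γ + s * φ 1 + 2 * s + a))
          rw [map_div₀, ← h9, mul_div_cancel_left₀ _ hne']
        rw [h10, mul_zero]
    by_cases hp : p = 2
    · subst hp
      have h11 : φ 1 = 1 := by
        exact zmod_two_aux _ hφ1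
      have h12 := hg 1
      rw [h11, one_smul] at h12
      have h13 : (1 : L) + 1 = 0 := by
        have : algebraMap (ZMod 2) L (1 + 1) = 0 := by
          have h20 : (1 + 1 : ZMod 2) = 0 := CharTwo.add_self_eq_zero 1
          rw [h20, map_zero]
        simpa using this
      rw [h13] at h12
      exact one_ne_zero (inj (by simpa using h12))
    · have h14 : (2 : ZMod p) * (φ 1 * (φ 1 + 2)) = 0 := by
        linear_combination key3 1 + key3 (-1) - 2 * key3 0
      have h2 : (2 : ZMod p) ≠ 0 := by
        intro h0
        have : (p : ℕ) ∣ 2 := (ZMod.natCast_eq_zero_iff 2 p).mp (by exact_mod_cast h0)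
        exact hp ((Nat.prime_dvd_prime_iff_eq Fact.out Nat.prime_two).mp this)
      have h15 := hγ2 a b hab hp
      rcases mul_eq_zero.mp h14 with h | h
      · exact h2 h
      rcases mul_eq_zero.mp h with h | h
      · exact hφ1 h
      · exact h15 (by linear_combination h)
  · push Not at hq
    have h0 : φ γ + 0 * φ 1 = 0 := by
      by_contra hne
      obtain ⟨b, hb⟩ := key2 0 hne
      exact hq _ _ hb
    have h1 : φ γ + 1 * φ 1 = 0 := by
      by_contra hne
      obtain ⟨b, hb⟩ := key2 1 hne
      exact hq _ _ hb
    exact hφ1 (by linear_combination h1 - h0)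

/-- The common kernel of the transvections with centre `v`. -/
def MemW (ρ : Γ →* Module.End (ZMod p) L) (v x : L) : Prop :=
  ∀ ψ : L →ₗ[ZMod p] ZMod p, ψ v = 0 → HasT ρ ψ v → ψ x = 0

lemma MemW.map {v x : L} (h : MemW ρ v x) (g : Γ) : MemW ρ (ρ g v) (ρ g x) := by
  intro ψ h1 h2
  have h3 := h2.conj g⁻¹
  rw [rho_inv_apply, inv_inv] at h3
  exact h _ h1 h3

lemma MemW.cmul (hm : HasMul ρ) {v x : L} (h : MemW ρ v x) {c : L} (hc : c ≠ 0) :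
    MemW ρ (c * v) (c * x) := by
  obtain ⟨g, hg⟩ := hm c hc
  rw [← hg, ← hg]; exact h.map g

lemma MemW.add {v x y : L} (h : MemW ρ v x) (h' : MemW ρ v y) : MemW ρ v (x + y) :=
  fun ψ h1 h2 => by rw [map_add, h ψ h1 h2, h' ψ h1 h2, add_zero]

lemma MemW.sub {v x y : L} (h : MemW ρ v x) (h' : MemW ρ v y) : MemW ρ v (x - y) :=
  fun ψ h1 h2 => by rw [map_sub, h ψ h1 h2, h' ψ h1 h2, sub_zero]

lemma MemW.smul {v x : L} (h : MemW ρ v x) (k : ZMod p) : MemW ρ v (k • x) :=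
  fun ψ h1 h2 => by rw [map_smul, h ψ h1 h2, smul_zero]

lemma MemW.self (v : L) : MemW ρ v v := fun _ h1 _ => h1

lemma MemW.symm [Finite L] (hm : HasMul ρ) {v w : L} (hv : v ≠ 0) (hw : w ≠ 0)
    (h : MemW ρ v w) : MemW ρ w v := by
  intro φ hφw hφ
  by_contra hne
  let Q : L → Set (L →ₗ[ZMod p] ZMod p) := fun v => {ψ | ψ v = 0 ∧ HasT ρ ψ v}
  have : Finite (L →ₗ[ZMod p] ZMod p) := Finite.of_injective _ DFunLike.coe_injective
  have hsub : Q v ⊆ Q w := by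
    rintro ψ ⟨h1, h2⟩
    have hψw := h ψ h1 h2
    obtain ⟨g, hg⟩ := id h2
    have h3 := hφ.conj g
    rw [hg, hψw, zero_smul, add_zero] at h3
    have h4 : φ ∘ₗ ρ g⁻¹ = φ - φ v • ψ := by
      ext y
      obtain ⟨x, rfl⟩ : ∃ x, y = ρ g x := ⟨ρ g⁻¹ y, (rho_apply_inv g y).symm⟩
      rw [LinearMap.comp_apply, rho_inv_apply, hg]
      simp only [LinearMap.sub_apply, LinearMap.smul_apply, map_add, map_smul, smul_eq_mul, h1]
      ring
    rw [h4] at h3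
    have h5 := hφ.sub h3 (by simp [hψw])
    have h6 := h5.smul (by simp [hψw]) (φ v)⁻¹
    refine ⟨hψw, ?_⟩
    convert h6 using 1
    rw [sub_sub_cancel, smul_smul, inv_mul_cancel₀ hne, one_smul]
  have hcard : (Q w).ncard ≤ (Q v).ncard := by
    have hc : v * w⁻¹ ≠ 0 := mul_ne_zero hv (inv_ne_zero hw)
    refine Set.ncard_le_ncard_of_injOn
      (fun ψ => ψ ∘ₗ LinearMap.mulLeft (ZMod p) (v * w⁻¹)⁻¹) ?_ ?_ (Set.toFinite _)
    · rintro ψ ⟨h1, h2⟩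
      have := h2.cmul hm hc
      rw [inv_mul_cancel_right₀ hw] at this
      refine ⟨?_, this⟩
      simp [hv, h1]
    · intro ψ _ ψ' _ heq
      ext x
      have := LinearMap.congr_fun heq ((v * w⁻¹) * x)
      simp only [LinearMap.comp_apply, LinearMap.mulLeft_apply] at this
      rwa [inv_mul_cancel_left₀ hc] at this
  have heq := Set.eq_of_subset_of_ncard_le hsub hcard (Set.toFinite _)
  have hmem : φ ∈ Q v := by rw [heq]; exact ⟨hφw, hφ⟩
  exact hne hmem.1

lemma MemW.inv [Finite L] (hm : HasMul ρ) {a : L} (h : MemW ρ 1 a) : MemW ρ 1 a⁻¹ := by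
  by_cases ha : a = 0
  · simpa [ha] using h
  have := (h.symm hm one_ne_zero ha).cmul hm (inv_ne_zero ha)
  simpa [ha] using this

lemma MemW.sq [Finite L] (hm : HasMul ρ) {a : L} (h : MemW ρ 1 a) : MemW ρ 1 (a ^ 2) := by
  by_cases ha : a = 0
  · simpa [ha] using h
  by_cases ha1 : 1 - a = 0
  · have : a = 1 := by linear_combination -ha1
    simpa [this] using MemW.self (ρ := ρ) 1
  have h1 := h.sub (((h.inv hm).add (((MemW.self 1).sub h).inv hm)).inv hm)
  convert h1 using 1
  have : a⁻¹ + (1 - a)⁻¹ = (a * (1 - a))⁻¹ := by field_simp; ring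
  rw [this, inv_inv]; ring

lemma MemW.sq_mul [Finite L] (hm : HasMul ρ) {a b : L} (h : MemW ρ 1 a) (hb : MemW ρ 1 b) :
    MemW ρ 1 (a ^ 2 * b) := by
  by_cases ha : a = 0
  · simpa [ha] using h
  by_cases hb0 : b = 0
  · simpa [hb0] using hb
  by_cases ha1 : b⁻¹ - a = 0
  · have : a ^ 2 * b = a := by
      have : b⁻¹ = a := by linear_combination ha1
      rw [← this]; field_simp
    rwa [this]
  have h1 := h.sub (((h.inv hm).add (((hb.inv hm).sub h).inv hm)).inv hm)
  convert h1 using 1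
  have : a⁻¹ + (b⁻¹ - a)⁻¹ = (a * (1 - a * b))⁻¹ := by
    have e1 : b⁻¹ - a = (1 - a * b) * b⁻¹ := by field_simp
    have e2 : 1 - a * b ≠ 0 := by
      intro h0; rw [e1, h0, zero_mul] at ha1; exact ha1 rfl
    rw [e1, mul_inv, inv_inv]
    field_simp; ring
  rw [this, inv_inv]; ring

lemma MemW.mul [Finite L] (hm : HasMul ρ) {a b : L} (h : MemW ρ 1 a) (hb : MemW ρ 1 b) :
    MemW ρ 1 (a * b) := by
  by_cases hp : p = 2
  · subst hp
    have : CharP L 2 := charP_of_injective_algebraMap (algebraMap (ZMod 2) L).injective 2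
    have : Fintype L := Fintype.ofFinite L
    obtain ⟨m, -, hcard⟩ := FiniteField.card L 2
    have hpow : ∀ k : ℕ, MemW ρ 1 (a ^ 2 ^ k) := by
      intro k
      induction k with
      | zero => simpa using h
      | succ k ih => rw [pow_succ, pow_mul]; exact ih.sq hm
    obtain ⟨k, hk⟩ : ∃ k, (m : ℕ) = k + 1 := ⟨m - 1, by have := m.pos; omega⟩
    have h1 := (hpow k).sq_mul hm hb
    rwa [← pow_mul, ← pow_succ, ← hk, ← hcard, FiniteField.pow_card] at h1
  · have h2 : (2 : ZMod p) ≠ 0 := by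
      intro h0
      have : (p : ℕ) ∣ 2 := (ZMod.natCast_eq_zero_iff 2 p).mp (by exact_mod_cast h0)
      exact hp ((Nat.prime_dvd_prime_iff_eq Fact.out Nat.prime_two).mp this)
    have h3 := ((((h.add hb).sq hm).sub (h.sq hm)).sub (hb.sq hm)).smul (2 : ZMod p)⁻¹
    have h4 : (a + b) ^ 2 - a ^ 2 - b ^ 2 = (2 : ZMod p) • (a * b) := by
      rw [two_smul]; ring
    rwa [h4, smul_smul, inv_mul_cancel₀ h2, one_smul] at h3

lemma all_transvections [Finite L] (hm : HasMul ρ) {ψ₀ : L →ₗ[ZMod p] ZMod p} {v₀ : L}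
    (hψ₀ : ψ₀ ≠ 0) (hv₀ : v₀ ≠ 0) (h0 : ψ₀ v₀ = 0) (h : HasT ρ ψ₀ v₀)
    {ψ : L →ₗ[ZMod p] ZMod p} {v : L} (hψv : ψ v = 0) : HasT ρ ψ v := by
  by_cases hv : v = 0
  · exact ⟨1, by simp [hv]⟩
  wlog hv1 : v = 1 generalizing ψ v
  · have := (this (ψ := ψ ∘ₗ LinearMap.mulLeft (ZMod p) v) (v := 1) (by simpa using hψv)
      one_ne_zero rfl).cmul hm hv
    convert this using 1
    · ext x; simp [hv]
    · simp
  subst hv1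
  obtain ⟨η, hη0, hη1, hη⟩ : ∃ η : L →ₗ[ZMod p] ZMod p, η ≠ 0 ∧ η 1 = 0 ∧ HasT ρ η 1 := by
    refine ⟨ψ₀ ∘ₗ LinearMap.mulLeft (ZMod p) v₀, ?_, by simpa using h0, ?_⟩
    · intro h0
      apply hψ₀
      ext x
      have := LinearMap.congr_fun h0 (v₀⁻¹ * x)
      simpa [hv₀] using this
    · have := h.cmul hm (inv_ne_zero hv₀)
      simpa [hv₀] using this
  have hW : ∀ a, MemW ρ 1 a → ∃ k : ZMod p, a = algebraMap _ L k := by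
    intro a ha
    obtain ⟨x, hx⟩ : ∃ x, η x ≠ 0 := by
      by_contra! hcon
      exact hη0 (LinearMap.ext hcon)
    have hx0 : x ≠ 0 := by rintro rfl; simp at hx
    set k := η (x * a) / η x with hk
    refine ⟨k, ?_⟩
    by_contra hne
    set d := a - algebraMap _ L k with hd
    have hd0 : d ≠ 0 := sub_ne_zero.mpr hne
    have hdW : MemW ρ 1 d := by
      rw [hd, Algebra.algebraMap_eq_smul_one]
      exact ha.sub ((MemW.self 1).smul k)
    set y := x * d with hy
    have hy0 : y ≠ 0 := mul_ne_zero hx0 hd0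
    have hηy : η y = 0 := by
      have : y = x * a - k • x := by rw [hy, hd, Algebra.smul_def]; ring
      rw [this, map_sub, map_smul, hk, smul_eq_mul, div_mul_cancel₀ _ hx, sub_self]
    obtain ⟨g, hg⟩ := id hη
    have h1 : MemW ρ x y := by simpa using hdW.cmul hm hx0
    have h2 := h1.map g
    rw [hg y, hηy, zero_smul, add_zero] at h2
    have hgx : ρ g x ≠ 0 := by
      intro h0
      apply hx0
      rw [← rho_inv_apply (ρ := ρ) g x, h0, map_zero]
    have h3 := ((h2.symm hm hgx hy0).sub (h1.symm hm hx0 hy0)).smul (η x)⁻¹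
    rw [hg, add_sub_cancel_left, smul_smul, inv_mul_cancel₀ hx, one_smul] at h3
    have h4 := h3.symm hm hy0 one_ne_zero
    have h5 := h4.mul hm (hdW.inv hm)
    rw [hy, mul_inv_cancel_right₀ hd0] at h5
    exact hx (h5 η hη1 hη)
  let Q : Submodule (ZMod p) (Module.Dual (ZMod p) L) :=
    { carrier := {ψ | ψ 1 = 0 ∧ HasT ρ ψ 1}
      zero_mem' := ⟨by simp, HasT.zero 1⟩
      add_mem' := by
        rintro a b ⟨ha, ha'⟩ ⟨hb, hb'⟩
        refine ⟨by simp [ha, hb], ?_⟩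
        have := ha'.sub (hb'.smul hb (-1)) (by simp [ha, hb])
        convert this using 1
        module
      smul_mem' := by
        rintro k a ⟨ha, ha'⟩
        exact ⟨by simp [ha], ha'.smul ha k⟩ }
  have hfd : Module.Finite (ZMod p) L := Module.Finite.of_finite
  have hQ : Q.dualCoannihilator.dualAnnihilator = Q := Subspace.dualCoannihilator_dualAnnihilator_eq
  have hmem : ψ ∈ Q.dualCoannihilator.dualAnnihilator := by
    rw [Submodule.mem_dualAnnihilator]
    intro x hx
    rw [Submodule.mem_dualCoannihilator] at hx
    obtain ⟨k, rfl⟩ := hW x (fun ψ h1 h2 => hx ψ ⟨h1, h2⟩)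
    rw [Algebra.algebraMap_eq_smul_one, map_smul, hψv, smul_zero]
  rw [hQ] at hmem
  exact hmem.2

end abstract_part

lemma whitehead_diag {ι F : Type} [Fintype ι] [DecidableEq ι] [Field F] {i j : ι} (hij : i ≠ j)
    {a : F} (ha : a ≠ 0) :
    Matrix.diagonal (Pi.mulSingle i a * Pi.mulSingle j a⁻¹ : ι → F) =
      transvection i j (-a) * transvection j i ((1 - a) / a) * (transvection i j 1 *
        transvection j i (a - 1)) := by
  have hji := hij.symm
  have e1 : transvection i j (-a) * transvection j i ((1 - a) / a) =
      1 + single i j (-a) + single j i ((1 - a) / a) + single i i (a - 1) := by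
    simp only [transvection, mul_add, add_mul, one_mul, mul_one, single_mul_single_same]
    rw [show -a * ((1 - a) / a) = a - 1 by field_simp; ring]
    abel
  have e2 : transvection i j 1 * transvection j i (a - 1) =
      1 + single i j 1 + single j i (a - 1) + single i i (a - 1) := by
    simp only [transvection, mul_add, add_mul, one_mul, mul_one, single_mul_single_same]
    abel
  rw [e1, e2]
  simp only [mul_add, add_mul, one_mul, mul_one, single_mul_single_same,
    single_mul_single_of_ne _ _ _ _ hij, single_mul_single_of_ne _ _ _ _ hji]
  ext k l
  simp only [Matrix.add_apply, Matrix.single_apply, Matrix.diagonal_apply, Matrix.one_apply,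
    Pi.mul_apply, Pi.mulSingle_apply, Matrix.zero_apply]
  by_cases hki : k = i
  · subst hki
    by_cases hlk : l = k
    · subst hlk
      simp [hij, hji]
      ring
    · by_cases hlj : l = j
      · subst hlj; simp [hij, hji]
      · simp [hij, hji, hlk, hlj, Ne.symm hlk, Ne.symm hlj]
  · by_cases hkj : k = j
    · subst hkj
      by_cases hlk : l = k
      · subst hlk
        simp [hij, hji]
        field_simp
        ring
      · by_cases hlj : l = i
        · subst hlj; simp [hij, hji]; field_simp; ring
        · simp [hij, hji, hlk, hlj, Ne.symm hlk, Ne.symm hlj]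
    · simp [hki, hkj, Ne.symm hki, Ne.symm hkj]

lemma eq_top_of_transvections {ι F : Type} [Fintype ι] [DecidableEq ι] [Field F]
    (G : Subgroup (GL ι F))
    (hT : ∀ i j : ι, i ≠ j → ∀ c : F, ∃ g ∈ G, (g : Matrix ι ι F) = transvection i j c)
    (hD : ∀ d : F, d ≠ 0 → ∃ g ∈ G, (g : Matrix ι ι F).det = d) : G = ⊤ := by
  let P : Matrix ι ι F → Prop := fun A => ∃ g ∈ G, (g : Matrix ι ι F) = A
  have hmul : ∀ A B, P A → P B → P (A * B) := by
    rintro _ _ ⟨g, hg, rfl⟩ ⟨h, hh, rfl⟩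
    exact ⟨g * h, G.mul_mem hg hh, rfl⟩
  let S : Submonoid (ι → F) :=
    { carrier := {D | P (Matrix.diagonal D)}
      one_mem' := ⟨1, G.one_mem, by simp⟩
      mul_mem' := by
        intro a b ha hb
        have := hmul _ _ ha hb
        rw [Matrix.diagonal_mul_diagonal] at this
        exact this }
  have hS : ∀ i j : ι, ∀ a : F, a ≠ 0 → Pi.mulSingle i a * Pi.mulSingle j a⁻¹ ∈ S := by
    intro i j a ha
    by_cases hij : i = j
    · subst hij
      rw [← Pi.mulSingle_mul, mul_inv_cancel₀ ha, Pi.mulSingle_one]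
      exact S.one_mem
    · change P _
      rw [whitehead_diag hij ha]
      exact hmul _ _ (hmul _ _ (hT _ _ hij _) (hT _ _ (Ne.symm hij) _))
        (hmul _ _ (hT _ _ hij _) (hT _ _ (Ne.symm hij) _))
  have hdiag : ∀ D : ι → F, ∏ i, D i = 1 → D ∈ S := by
    intro D hDet
    have hD0 : ∀ i, D i ≠ 0 := fun i h0 => by
      rw [Finset.prod_eq_zero (Finset.mem_univ i) h0] at hDet
      exact zero_ne_one hDet
    rcases isEmpty_or_nonempty ι with hι | ⟨⟨i0⟩⟩
    · have : D = 1 := Subsingleton.elim _ _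
      rw [this]; exact S.one_mem
    · have h1 : ∏ i, (Pi.mulSingle i (D i) * Pi.mulSingle i0 (D i)⁻¹ : ι → F) ∈ S :=
        S.prod_mem fun i _ => hS _ _ _ (hD0 i)
      have h2 : ∏ i, (Pi.mulSingle i0 (D i)⁻¹ : ι → F) = 1 := by
        have := map_prod (MonoidHom.mulSingle (fun _ : ι => F) i0) (fun i => (D i)⁻¹) Finset.univ
        simp only [MonoidHom.mulSingle_apply] at this
        rw [← this, Finset.prod_inv_distrib, hDet, inv_one, Pi.mulSingle_one]
      rwa [Finset.prod_mul_distrib, Finset.univ_prod_mulSingle, h2, mul_one] at h1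
  have hone : ∀ A : Matrix ι ι F, A.det = 1 → P A := by
    intro A hA
    refine Matrix.diagonal_transvection_induction P A ?_ ?_ hmul
    · intro D hdet
      rw [hA, Matrix.det_diagonal] at hdet
      exact hdiag D hdet
    · intro t
      exact hT _ _ t.hij _
  rw [eq_top_iff]
  intro M _
  have hM : (M : Matrix ι ι F).det ≠ 0 := by
    have := (Matrix.isUnits_det_units M).ne_zero
    exact this
  obtain ⟨g, hg, hgd⟩ := hD _ hM
  obtain ⟨h, hh, hhe⟩ := hone ((g⁻¹ * M : GL ι F) : Matrix ι ι F) (by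
    have e : (g : Matrix ι ι F).det * ((g⁻¹ * M : GL ι F) : Matrix ι ι F).det
        = (M : Matrix ι ι F).det := by
      rw [← Matrix.det_mul, ← Units.val_mul, mul_inv_cancel_left]
    rw [hgd] at e
    exact mul_left_cancel₀ hM (by rw [e, mul_one]))
  have : h = g⁻¹ * M := Units.ext hhe
  have hM' : M = g * h := by rw [this, mul_inv_cancel_left]
  rw [hM']
  exact G.mul_mem hg hh

section final_part
variable {p : ℕ} [Fact p.Prime] {f : Polynomial (ZMod p)}

/-- The power basis of `AdjoinRoot f`. -/
noncomputable def bas (hm : f.Monic) :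
    Module.Basis (Fin f.natDegree) (ZMod p) (AdjoinRoot f) := (AdjoinRoot.powerBasis' hm).basis

lemma bas_apply (hm : f.Monic) (i : Fin f.natDegree) :
    bas hm i = AdjoinRoot.root f ^ (i : ℕ) := (AdjoinRoot.powerBasis' hm).basis_eq_pow i

lemma root_pow_natDegree (hm : f.Monic) :
    AdjoinRoot.root f ^ f.natDegree = ∑ i : Fin f.natDegree, (-f.coeff i) • bas hm i := by
  have h := AdjoinRoot.eval₂_root f
  rw [Polynomial.eval₂_eq_sum_range, Finset.sum_range_succ, Polynomial.coeff_natDegree,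
    hm.leadingCoeff, map_one, one_mul, Finset.sum_range] at h
  simp only [bas_apply, neg_smul, Finset.sum_neg_distrib]
  rw [eq_neg_iff_add_eq_zero, add_comm, ← h]
  congr 1
  refine Finset.sum_congr rfl fun i _ => ?_
  rw [Algebra.smul_def]; rfl

lemma companion_lt (hm : f.Monic) (g : Polynomial (ZMod p)) (j : Fin f.natDegree)
    (hj : (j : ℕ) + 1 < f.natDegree) :
    toLin (bas hm) (bas hm) (companionMatrix f.natDegree g) (bas hm j) =
      AdjoinRoot.root f ^ ((j : ℕ) + 1) := by
  rw [Matrix.toLin_self, Finset.sum_eq_single (⟨j + 1, hj⟩ : Fin f.natDegree)]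
  · rw [bas_apply]
    simp [companionMatrix, show (j : ℕ) ≠ f.natDegree - 1 by omega]
  · intro i _ hi
    have : (i : ℕ) ≠ j + 1 := fun h => hi (Fin.ext h)
    simp [companionMatrix, show (j : ℕ) ≠ f.natDegree - 1 by omega, this]
  · simp

lemma companion_last (hm : f.Monic) (g : Polynomial (ZMod p)) (j : Fin f.natDegree)
    (hj : (j : ℕ) + 1 = f.natDegree) :
    toLin (bas hm) (bas hm) (companionMatrix f.natDegree g) (bas hm j) =
      ∑ i : Fin f.natDegree, (-g.coeff i) • bas hm i := by
  rw [Matrix.toLin_self]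
  simp [companionMatrix, show (j : ℕ) = f.natDegree - 1 by omega]

lemma companion_self (hm : f.Monic) (x : AdjoinRoot f) :
    toLin (bas hm) (bas hm) (companionMatrix f.natDegree f) x = AdjoinRoot.root f * x := by
  have : toLin (bas hm) (bas hm) (companionMatrix f.natDegree f) =
      LinearMap.mulLeft (ZMod p) (AdjoinRoot.root f) := by
    refine (bas hm).ext fun j => ?_
    rw [LinearMap.mulLeft_apply, bas_apply, ← pow_succ', ← bas_apply hm]
    rcases Nat.lt_or_ge ((j : ℕ) + 1) f.natDegree with hj | hj
    · rw [companion_lt hm f j hj]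
    · have hj' : (j : ℕ) + 1 = f.natDegree := by omega
      rw [companion_last hm f j hj', hj', root_pow_natDegree hm]
  rw [this, LinearMap.mulLeft_apply]

lemma companion_g_last (hm : f.Monic) (hn : 0 < f.natDegree) (j : Fin f.natDegree)
    (hj : (j : ℕ) + 1 = f.natDegree) :
    toLin (bas hm) (bas hm) (companionMatrix f.natDegree (X ^ f.natDegree - 1)) (bas hm j) = 1 := by
  rw [companion_last hm _ j hj, Finset.sum_eq_single (⟨0, hn⟩ : Fin f.natDegree)]
  · rw [bas_apply]
    simp [Polynomial.coeff_X_pow, hn.ne]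
  · intro i _ hi
    have h0 : (i : ℕ) ≠ 0 := fun h => hi (Fin.ext h)
    have h1 : (i : ℕ) ≠ f.natDegree := i.2.ne
    simp [Polynomial.coeff_X_pow, Polynomial.coeff_one, h0, h1]
  · simp

lemma companion_rel (hm : f.Monic) (hn : 0 < f.natDegree) (x : AdjoinRoot f) :
    AdjoinRoot.root f * x =
      toLin (bas hm) (bas hm) (companionMatrix f.natDegree (X ^ f.natDegree - 1)) x +
      (bas hm).coord ⟨0, hn⟩
        (toLin (bas hm) (bas hm) (companionMatrix f.natDegree (X ^ f.natDegree - 1)) x) •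
        (AdjoinRoot.root f ^ f.natDegree - 1) := by
  set T := toLin (bas hm) (bas hm) (companionMatrix f.natDegree (X ^ f.natDegree - 1)) with hT
  have : LinearMap.mulLeft (ZMod p) (AdjoinRoot.root f) = T +
      ((bas hm).coord ⟨0, hn⟩ ∘ₗ T).smulRight (AdjoinRoot.root f ^ f.natDegree - 1) := by
    refine (bas hm).ext fun j => ?_
    simp only [LinearMap.mulLeft_apply, LinearMap.add_apply, LinearMap.smulRight_apply,
      LinearMap.comp_apply]
    rw [bas_apply, ← pow_succ', ← bas_apply hm]
    rcases Nat.lt_or_ge ((j : ℕ) + 1) f.natDegree with hj | hj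
    · rw [hT, companion_lt hm _ j hj]
      have e : AdjoinRoot.root f ^ ((j : ℕ) + 1) = bas hm ⟨j + 1, hj⟩ := by rw [bas_apply]
      have e0 : (bas hm).coord ⟨0, hn⟩ (bas hm ⟨j + 1, hj⟩) = 0 := by
        rw [Module.Basis.coord_apply, Module.Basis.repr_self, Finsupp.single_apply, if_neg]
        simp
      rw [e, e0, zero_smul, add_zero]
    · have hj' : (j : ℕ) + 1 = f.natDegree := by omega
      rw [hT, companion_g_last hm hn j hj', hj']
      have e : (1 : AdjoinRoot f) = bas hm ⟨0, hn⟩ := by rw [bas_apply]; simp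
      have e0 : (bas hm).coord ⟨0, hn⟩ (1 : AdjoinRoot f) = 1 := by
        rw [e, Module.Basis.coord_apply, Module.Basis.repr_self, Finsupp.single_apply, if_pos rfl]
      rw [e0, one_smul]; ring
  have h := LinearMap.congr_fun this x
  simpa using h

lemma coord_center (hm : f.Monic) (hn : 0 < f.natDegree) :
    (bas hm).coord ⟨0, hn⟩ (AdjoinRoot.root f ^ f.natDegree - 1) = -f.coeff 0 - 1 := by
  have e : (1 : AdjoinRoot f) = bas hm ⟨0, hn⟩ := by rw [bas_apply]; simp
  rw [map_sub, root_pow_natDegree hm, e]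
  simp only [Module.Basis.coord_apply]
  rw [Module.Basis.repr_sum_self, Module.Basis.repr_self, Finsupp.single_apply, if_pos rfl]

lemma natDegree_le_of_root {q : Polynomial (ZMod p)} (hq : q ≠ 0)
    (h : AdjoinRoot.mk f q = 0) : f.natDegree ≤ q.natDegree :=
  Polynomial.natDegree_le_of_dvd (AdjoinRoot.mk_eq_zero.mp h) hq

end final_part

/-- Degos's conjecture: over `F_p` (`p` prime), if `f` is a primitive polynomial
of degree `n` and `g = X^n - 1`, then `C_f` and `C_g` generate `GL_n(F_p)`. -/
theorem stmt_1 (p n : ℕ) [Fact p.Prime] (hn : 0 < n)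
    (f : Polynomial (ZMod p)) (hf : IsPrimitivePoly f n)
    (Cf Cg : GL (Fin n) (ZMod p))
    (hCf : (Cf : Matrix (Fin n) (Fin n) (ZMod p)) = companionMatrix n f)
    (hCg : (Cg : Matrix (Fin n) (Fin n) (ZMod p)) =
      companionMatrix n (X ^ n - 1 : Polynomial (ZMod p))) :
    Subgroup.closure {Cf, Cg} = ⊤ := by
  classical
  obtain ⟨hm, hdeg, hirr, u, hu, hgen⟩ := hf
  subst hdeg
  have : Fact (Irreducible f) := ⟨hirr⟩
  have hfin : Module.Finite (ZMod p) (AdjoinRoot f) := hm.finite_adjoinRoot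
  have hfinL : Finite (AdjoinRoot f) := Module.finite_of_finite (ZMod p)
  set G := Subgroup.closure {Cf, Cg} with hG
  have hCfG : Cf ∈ G := Subgroup.subset_closure (by simp)
  have hCgG : Cg ∈ G := Subgroup.subset_closure (by simp)
  let ρ : G →* Module.End (ZMod p) (AdjoinRoot f) :=
    ((toLinAlgEquiv (bas hm)).toMulEquiv.toMonoidHom.comp (Units.coeHom _)).comp G.subtype
  have hρ : ∀ g : G, ρ g = toLin (bas hm) (bas hm)
      ((g : GL (Fin f.natDegree) (ZMod p)) : Matrix _ _ (ZMod p)) := fun g => rfl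
  let S : Subgroup (AdjoinRoot f)ˣ :=
    { carrier := {c | ∃ g : G, ∀ x, ρ g x = c * x}
      one_mem' := ⟨1, by simp⟩
      mul_mem' := by
        rintro a b ⟨g, hg⟩ ⟨h, hh⟩
        exact ⟨g * h, fun x => by
          rw [map_mul, Module.End.mul_apply, hh, hg, Units.val_mul, mul_assoc]⟩
      inv_mem' := by
        rintro a ⟨g, hg⟩
        refine ⟨g⁻¹, fun x => ?_⟩
        apply Function.LeftInverse.injective (rho_inv_apply (ρ := ρ) g)
        rw [rho_apply_inv, hg]
        simp }
  have huS : u ∈ S := ⟨⟨Cf, hCfG⟩, fun x => by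
    rw [hρ]
    simp only [hCf, hu]
    exact companion_self hm x⟩
  have hmul : HasMul ρ := by
    intro c hc
    have : Units.mk0 c hc ∈ S := by
      have h1 := hgen (Units.mk0 c hc)
      exact (Subgroup.zpowers_le.mpr huS) h1
    exact this
  refine eq_top_of_transvections G ?_ ?_
  · intro i j hij c
    have hn2 : 2 ≤ f.natDegree := by
      have h1 := i.2
      have h2 := j.2
      have h3 : (i : ℕ) ≠ j := fun h => hij (Fin.ext h)
      omega
    have hTT : HasT ρ ((bas hm).coord ⟨0, hn⟩) (AdjoinRoot.root f ^ f.natDegree - 1) := by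
      refine ⟨⟨Cf, hCfG⟩ * ⟨Cg, hCgG⟩⁻¹, fun y => ?_⟩
      obtain ⟨x, rfl⟩ : ∃ x, y = ρ ⟨Cg, hCgG⟩ x := ⟨ρ ⟨Cg, hCgG⟩⁻¹ y, (rho_apply_inv _ y).symm⟩
      rw [map_mul, Module.End.mul_apply, rho_inv_apply, hρ, hρ]
      simp only [hCf, hCg]
      rw [companion_self hm x]
      exact companion_rel hm hn x
    have hφ0 : (bas hm).coord ⟨0, hn⟩ ≠ 0 := by
      intro h0
      have := LinearMap.congr_fun h0 (bas hm ⟨0, hn⟩)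
      simp at this
    have hu0 : AdjoinRoot.root f ^ f.natDegree - 1 ≠ 0 := by
      intro h0
      have h1 : AdjoinRoot.mk f (X ^ f.natDegree - 1) = 0 := by simpa using h0
      have h2 := AdjoinRoot.mk_eq_zero.mp h1
      have hmon : (X ^ f.natDegree - 1 : Polynomial (ZMod p)).Monic := by
        simpa using monic_X_pow_sub_C (1 : ZMod p) hn.ne'
      have hdeg : (X ^ f.natDegree - 1 : Polynomial (ZMod p)).natDegree = f.natDegree := by
        simpa using natDegree_X_pow_sub_C (n := f.natDegree) (r := (1 : ZMod p))
      have h3 := Polynomial.eq_of_monic_of_dvd_of_natDegree_le hm hmon h2 hdeg.le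
      have h4 : f.IsRoot 1 := by rw [← h3]; simp
      have h5 := Polynomial.degree_eq_one_of_irreducible_of_root hirr h4
      have h6 : f.natDegree = 1 := Polynomial.natDegree_eq_of_degree_eq_some h5
      omega
    obtain ⟨ψ, v, hψ, hv, hψv, hT⟩ := exists_transvection hmul hTT hφ0 hu0 (AdjoinRoot.root f)
      (by
        intro k hk
        have h1 : AdjoinRoot.mk f (X - C k) = 0 := by
          rw [map_sub, AdjoinRoot.mk_X, AdjoinRoot.mk_C, sub_eq_zero]; exact hk
        have := natDegree_le_of_root (X_sub_C_ne_zero k) h1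
        rw [natDegree_X_sub_C] at this
        omega)
      (by
        intro a b hab hp2
        rw [coord_center hm hn]
        have h1 : AdjoinRoot.mk f (X ^ 2 - (C a * X + C b)) = 0 := by
          rw [map_sub, map_pow, map_add, map_mul, AdjoinRoot.mk_X, AdjoinRoot.mk_C,
            AdjoinRoot.mk_C, sub_eq_zero]
          exact hab
        have hd : (X ^ 2 - (C a * X + C b) : Polynomial (ZMod p)).natDegree = 2 := by
          compute_degree!
        have h2 := natDegree_le_of_root (by intro h0; rw [h0] at hd; simp at hd) h1
        rw [hd] at h2
        have hn2' : f.natDegree = 2 := le_antisymm h2 hn2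
        intro h3
        have h4 : f.coeff 0 = 1 := by linear_combination -h3
        have h5 : Algebra.norm (ZMod p) (AdjoinRoot.root f) = 1 := by
          have := Algebra.PowerBasis.norm_gen_eq_coeff_zero_minpoly (AdjoinRoot.powerBasis' hm)
          rw [AdjoinRoot.powerBasis'_gen, AdjoinRoot.minpoly_root hm.ne_zero,
            AdjoinRoot.powerBasis'_dim, hn2', hm.leadingCoeff] at this
          rw [this]; simp [h4]
        have h6 : ∀ c : AdjoinRoot f, c ≠ 0 → Algebra.norm (ZMod p) c = 1 := by
          intro c hc
          have h7 : Subgroup.zpowers u ≤ (Units.map (Algebra.norm (ZMod p))).ker := by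
            rw [Subgroup.zpowers_le, MonoidHom.mem_ker]
            ext
            simp [hu, h5]
          have h8 := h7 (hgen (Units.mk0 c hc))
          rw [MonoidHom.mem_ker, Units.ext_iff] at h8
          simpa using h8
        obtain ⟨c, hc⟩ := FiniteField.norm_surjective (ZMod p) (AdjoinRoot f) (-1)
        have hc0 : c ≠ 0 := by
          rintro rfl
          rw [Algebra.norm_zero] at hc
          exact (neg_ne_zero.mpr one_ne_zero) hc.symm
        have h9 := h6 c hc0
        rw [hc] at h9
        have h10 : ((2 : ℕ) : ZMod p) = 0 := by push_cast; linear_combination -h9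
        have h11 := (ZMod.natCast_eq_zero_iff 2 p).mp h10
        exact hp2 ((Nat.prime_dvd_prime_iff_eq Fact.out Nat.prime_two).mp h11))
    obtain ⟨g, hg⟩ := all_transvections hmul hψ hv hψv hT
      (ψ := c • (bas hm).coord j) (v := bas hm i) (by simp [hij])
    refine ⟨g, g.2, ?_⟩
    apply (toLin (bas hm) (bas hm)).injective
    rw [← hρ]
    refine (bas hm).ext fun k => ?_
    rw [hg, transvection, map_add, toLin_one, LinearMap.add_apply, LinearMap.id_apply]
    congr 1
    rw [toLin_self, Finset.sum_eq_single i]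
    · by_cases hk : k = j
      · subst hk; simp
      · simp [hk, Ne.symm hk]
    · intro l _ hl
      simp [Ne.symm hl]
    · simp
  · intro d hd
    obtain ⟨c, hc⟩ := FiniteField.norm_surjective (ZMod p) (AdjoinRoot f) d
    have hc0 : c ≠ 0 := by
      rintro rfl
      rw [Algebra.norm_zero] at hc
      exact hd hc.symm
    obtain ⟨g, hg⟩ := hmul c hc0
    refine ⟨g, g.2, ?_⟩
    rw [← hc, Algebra.norm_apply, ← LinearMap.det_toLin (bas hm), ← hρ]
    congr 1
    ext x
    simp [hg]
end

section
/- Let q be a prime power, n a positive integer, and let f ∈ F_q[X] be a primitive polynomial of degree n. Then the cyclic group ⟨C_f⟩ generated by the companion matrix of f acts transitively on the set of non-zero vectors of the vector space F_q^n. -/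
open Polynomial Matrix
open scoped MatrixGroups

/-- The cyclic group generated by the companion matrix of a primitive polynomial
of degree `n` over `F_q` acts transitively on the non-zero vectors of `F_q^n`. -/
theorem stmt_5 (q n : ℕ) (hq : IsPrimePow q) (hn : 0 < n)
    (F : Type) [Field F] [Fintype F] (hF : Fintype.card F = q)
    (f : Polynomial F) (hf : IsPrimitivePoly f n)
    (Cf : GL (Fin n) F)
    (hCf : (Cf : Matrix (Fin n) (Fin n) F) = companionMatrix n f) :
    ∀ v w : Fin n → F, v ≠ 0 → w ≠ 0 →
      ∃ x ∈ Subgroup.zpowers Cf,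
        ((x : GL (Fin n) F) : Matrix (Fin n) (Fin n) F).mulVec v = w := by
  classical
  obtain ⟨hm, hdeg, hirr, u, hu, hgen⟩ := hf
  haveI : Fact (Irreducible f) := ⟨hirr⟩
  obtain ⟨pb, hpbgen, hdim⟩ : ∃ pb : PowerBasis F (AdjoinRoot f),
      pb.gen = AdjoinRoot.root f ∧ pb.dim = n :=
    ⟨AdjoinRoot.powerBasis' hm, AdjoinRoot.powerBasis'_gen hm,
      (AdjoinRoot.powerBasis'_dim hm).trans hdeg⟩
  have hmin : pb.minpolyGen = f := by
    rw [PowerBasis.minpolyGen_eq, hpbgen, AdjoinRoot.minpoly_root hirr.ne_zero, hm.leadingCoeff]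
    simp
  subst hdim
  have hC : Cf = Units.map (Algebra.leftMulMatrix pb.basis : AdjoinRoot f →* _) u := by
    ext i j
    rw [hCf]
    have h1 : ((Units.map (Algebra.leftMulMatrix pb.basis : AdjoinRoot f →* _) u :
        GL (Fin pb.dim) F) : Matrix (Fin pb.dim) (Fin pb.dim) F)
        = Algebra.leftMulMatrix pb.basis pb.gen := by
      rw [hpbgen, ← hu]; rfl
    rw [h1, PowerBasis.leftMulMatrix, hmin]
    have h2 : ((j : ℕ) = pb.dim - 1) ↔ ((j : ℕ) + 1 = pb.dim) := by omega
    simp only [companionMatrix, Matrix.of_apply, h2]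
  intro v w hv hw
  obtain ⟨y, rfl⟩ := pb.basis.equivFun.surjective v
  obtain ⟨z, rfl⟩ := pb.basis.equivFun.surjective w
  have hy : y ≠ 0 := by rintro rfl; simp at hv
  have hz : z ≠ 0 := by rintro rfl; simp at hw
  obtain ⟨k, hk⟩ := hgen (Units.mk0 (z * y⁻¹) (mul_ne_zero hz (inv_ne_zero hy)))
  refine ⟨Cf ^ k, ⟨k, rfl⟩, ?_⟩
  have hk' : u ^ k = Units.mk0 (z * y⁻¹) (mul_ne_zero hz (inv_ne_zero hy)) := hk
  rw [hC, ← map_zpow, hk']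
  have := Algebra.leftMulMatrix_mulVec_repr pb.basis (z * y⁻¹) y
  rw [inv_mul_cancel_right₀ hy] at this
  exact this
end

section
/- Let q be a prime power, n ≥ 1, and let d be a divisor of n. Suppose S ≤ GL_n(F_q) is a cyclic subgroup of order q^n − 1 (a Singer subgroup), and suppose H₁ and H₂ are subgroups of GL_n(F_q), each containing S, and each isomorphic as an abstract group to GL_{n/d}(F_{q^d}). Then H₁ = H₂. -/
open Matrix
open scoped MatrixGroups

lemma cardC {n m Q : ℕ} {F E K : Type} [Field F] [Fintype F] [Field E] [Fintype E] [Field K] [Fintype K]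
    (hE : Nat.card E = Q) (hK : Fintype.card K = Q) (hV : Fintype.card F ^ n = Q ^ m)
    (ψ : E →+* Matrix (Fin n) (Fin n) F) (C : Subgroup (GL (Fin n) F))
    (hC : ∀ c ∈ C, ∀ e, (c : Matrix (Fin n) (Fin n) F) * ψ e = ψ e * c) :
    Nat.card C ≤ Nat.card (GL (Fin m) K) := by
  classical
  let _ : Module E (Fin n → F) :=
    Module.compHom (Fin n → F) ((Matrix.toLinAlgEquiv' (R := F) (n := Fin n)).toRingEquiv.toRingHom.comp ψ)
  have hsm : ∀ (e : E) (v : Fin n → F), e • v = ψ e *ᵥ v := fun e v => rfl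
  rw [Nat.card_eq_fintype_card] at hE
  have hQ : 1 < Q := by rw [← hE]; exact Fintype.one_lt_card
  have hfr : Module.finrank E (Fin n → F) = m := by
    have := Module.card_eq_pow_finrank (K := E) (V := Fin n → F)
    rw [hE, Fintype.card_fun, Fintype.card_fin, hV] at this
    exact (Nat.pow_right_injective hQ this).symm
  let b := Module.finBasisOfFinrankEq E (Fin n → F) hfr
  have e1 : ((Fin n → F) ≃ₗ[E] (Fin n → F)) ≃ GL (Fin m) E :=
    (LinearMap.GeneralLinearGroup.generalLinearEquiv E (Fin n → F)).symm.toEquiv.trans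
      (Units.mapEquiv (LinearMap.toMatrixAlgEquiv b).toRingEquiv.toMulEquiv).toEquiv
  have e2 : Nat.card (GL (Fin m) E) = Nat.card (GL (Fin m) K) := by
    rw [Matrix.card_GL_field, Matrix.card_GL_field, hE, hK]
  rw [← e2, ← Nat.card_congr e1]
  have : Finite ((Fin n → F) ≃ₗ[E] (Fin n → F)) := Finite.of_equiv _ e1.symm
  let f : C → ((Fin n → F) ≃ₗ[E] (Fin n → F)) := fun c =>
    { toFun := fun v => (c.1 : Matrix (Fin n) (Fin n) F) *ᵥ v
      invFun := fun v => ((c.1⁻¹ : GL (Fin n) F) : Matrix (Fin n) (Fin n) F) *ᵥ v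
      map_add' := fun v w => Matrix.mulVec_add _ _ _
      map_smul' := fun e v => by
        simp only [hsm, Matrix.mulVec_mulVec, RingHom.id_apply, hC c.1 c.2 e]
      left_inv := fun v => by
        simp only [Matrix.mulVec_mulVec, ← Units.val_mul]; simp
      right_inv := fun v => by
        simp only [Matrix.mulVec_mulVec, ← Units.val_mul]; simp }
  refine Nat.card_le_card_of_injective f ?_
  intro c c' h
  apply Subtype.ext
  apply Units.ext
  apply Matrix.mulVec_injective
  funext v
  exact LinearEquiv.congr_fun h v

lemma card_center {m : ℕ} {K : Type} [Field K] [Fintype K] (hm : 1 ≤ m) :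
    Nat.card (Subgroup.center (GL (Fin m) K)) = Fintype.card K - 1 := by
  classical
  have : Nonempty (Fin m) := ⟨⟨0, hm⟩⟩
  rw [Matrix.GeneralLinearGroup.center_eq_range_scalar, ← Fintype.card_units, ← Nat.card_eq_fintype_card]
  refine (Nat.card_congr (MonoidHom.ofInjective (f := Matrix.GeneralLinearGroup.scalar (Fin m) (R := K)) ?_).toEquiv).symm
  intro a b h
  have := congrArg (fun g : GL (Fin m) K => (g : Matrix (Fin m) (Fin m) K) ⟨0, hm⟩ ⟨0, hm⟩) h
  apply Units.ext
  simpa using this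

open Polynomial in
lemma cardA {n q : ℕ} {F : Type} [Field F] [Fintype F] (hF : Fintype.card F = q)
    (hn : 1 ≤ n) (g : GL (Fin n) F)
    (hg : Nat.card (Subgroup.zpowers g) = q ^ n - 1) :
    ∃ (L : Type) (_ : Field L) (_ : Fintype L) (φ : L →+* Matrix (Fin n) (Fin n) F),
      Nat.card L = q ^ n ∧ ∀ x, ∃ p : F[X], φ x = aeval (g : Matrix (Fin n) (Fin n) F) p := by
  classical
  let M : Matrix (Fin n) (Fin n) F := g
  let I := RingHom.ker (aeval (R := F) M).toRingHom
  let φ : F[X] ⧸ I →+* Matrix (Fin n) (Fin n) F := RingHom.kerLift (aeval (R := F) M).toRingHom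
  have hφ : Function.Injective φ := RingHom.kerLift_injective _
  have hφ' : ∀ x, ∃ p : F[X], φ x = aeval M p := by
    intro x
    obtain ⟨p, rfl⟩ := Ideal.Quotient.mk_surjective x
    exact ⟨p, rfl⟩
  have : Finite (F[X] ⧸ I) := Finite.of_injective φ hφ
  have hq : 1 < q := by rw [← hF]; exact Fintype.one_lt_card
  have : Nonempty (Fin n) := ⟨⟨0, hn⟩⟩
  have hle : Nat.card (F[X] ⧸ I) ≤ q ^ n := by
    have : Function.Surjective (fun c : Fin n → F =>
        Ideal.Quotient.mk I (∑ i : Fin n, C (c i) * X ^ (i : ℕ))) := by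
      intro x
      obtain ⟨p, rfl⟩ := Ideal.Quotient.mk_surjective x
      refine ⟨fun i => (p %ₘ M.charpoly).coeff i, ?_⟩
      apply hφ
      change aeval M _ = aeval M p
      rw [Matrix.aeval_eq_aeval_mod_charpoly M p]
      congr 1
      have hd : (p %ₘ M.charpoly).natDegree < n := by
        have := Polynomial.natDegree_modByMonic_lt p (Matrix.charpoly_monic M) (by
          intro h
          have := Matrix.charpoly_natDegree_eq_dim M
          rw [h] at this
          simp at this; omega)
        rwa [Matrix.charpoly_natDegree_eq_dim, Fintype.card_fin] at this
      rw [Fin.sum_univ_eq_sum_range (fun i => C ((p %ₘ M.charpoly).coeff i) * X ^ i) n]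
      exact (Polynomial.as_sum_range_C_mul_X_pow' _ hd).symm
    have := Nat.card_le_card_of_surjective _ this
    simpa [hF] using this
  let f : Option (Subgroup.zpowers g) → Matrix (Fin n) (Fin n) F := fun o => o.elim 0 (fun s => (s.1 : Matrix (Fin n) (Fin n) F))
  have hf : Function.Injective f := by
    rintro (_ | a) (_ | b) h
    · rfl
    · exact absurd h.symm (b.1).ne_zero
    · exact absurd h (a.1).ne_zero
    · exact congrArg some (Subtype.ext (Units.ext h))
  have hsub : Set.range f ⊆ Set.range φ := by
    rintro _ ⟨(_ | ⟨a, ha⟩), rfl⟩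
    · exact ⟨0, map_zero _⟩
    · rw [← mem_powers_iff_mem_zpowers] at ha
      obtain ⟨k, rfl⟩ := ha
      refine ⟨Ideal.Quotient.mk I (X ^ k), ?_⟩
      change aeval M _ = _
      simp [f, M]
  have hcf : Nat.card (Set.range f) = q ^ n := by
    rw [Nat.card_range_of_injective hf, Finite.card_option, hg]
    have : 0 < q ^ n := by positivity
    omega
  have hcφ : Nat.card (Set.range φ) = Nat.card (F[X] ⧸ I) := Nat.card_range_of_injective hφ
  have heq : Set.range f = Set.range φ := by
    apply Set.eq_of_subset_of_ncard_le hsub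
    rw [← Nat.card_coe_set_eq, ← Nat.card_coe_set_eq]; omega
  have hcard : Nat.card (F[X] ⧸ I) = q ^ n := by rw [← hcφ, ← heq, hcf]
  have hunit : ∀ x, x ≠ 0 → IsUnit (φ x) := by
    intro x hx
    have : φ x ∈ Set.range f := heq ▸ ⟨x, rfl⟩
    obtain ⟨(_ | a), ha⟩ := this
    · exact absurd (hφ (ha.symm.trans (map_zero φ).symm)) hx
    · exact ⟨a.1, ha⟩
  have : Nontrivial (F[X] ⧸ I) := φ.domain_nontrivial
  have : NoZeroDivisors (F[X] ⧸ I) := ⟨by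
    intro a b hab
    by_contra! h
    have := (hunit a h.1).mul (hunit b h.2)
    rw [← map_mul, hab, map_zero] at this
    exact not_isUnit_zero this⟩
  have : IsDomain (F[X] ⧸ I) := NoZeroDivisors.to_isDomain _
  exact ⟨F[X] ⧸ I, (Finite.isField_of_domain _).toField, Fintype.ofFinite _, φ, hcard, hφ'⟩

/-- an invertible matrix commuting with the field lies in it -/
lemma mem_of_comm {n : ℕ} {F L : Type} [Field F] [Fintype F] [Field L] [Fintype L] (hn : 1 ≤ n)
    (φ : L →+* Matrix (Fin n) (Fin n) F) (hL : Nat.card L = Fintype.card F ^ n)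
    (z : Matrix (Fin n) (Fin n) F) (hz : ∀ x, z * φ x = φ x * z) : ∃ x, φ x = z := by
  classical
  let v : Fin n → F := fun _ => 1
  have hv : v ≠ 0 := fun h => one_ne_zero (congrFun h ⟨0, hn⟩)
  have hinj : Function.Injective (fun x => φ x *ᵥ v) := by
    intro a b h
    by_contra hne
    have h0 : φ (a - b) *ᵥ v = 0 := by
      rw [map_sub, Matrix.sub_mulVec]; exact sub_eq_zero.2 h
    apply hv
    have : (φ ((a-b)⁻¹) * φ (a - b)) *ᵥ v = 0 := by
      rw [← Matrix.mulVec_mulVec, h0, Matrix.mulVec_zero]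
    rwa [← map_mul, inv_mul_cancel₀ (sub_ne_zero.2 hne), map_one, Matrix.one_mulVec] at this
  have hsurj : Function.Surjective (fun x => φ x *ᵥ v) := by
    refine ((Fintype.bijective_iff_injective_and_card _).2 ⟨hinj, ?_⟩).2
    rw [← Nat.card_eq_fintype_card, hL]; simp
  obtain ⟨x, hx⟩ := hsurj (z *ᵥ v)
  refine ⟨x, ?_⟩
  apply Matrix.mulVec_injective
  funext w
  obtain ⟨y, rfl⟩ := hsurj w
  simp only at hx ⊢
  rw [Matrix.mulVec_mulVec, Matrix.mulVec_mulVec, ← map_mul, mul_comm, map_mul, hz,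
    ← Matrix.mulVec_mulVec, hx, Matrix.mulVec_mulVec]

/-- elements of H commute with fixed field -/
lemma comm_fix {n m Q : ℕ} {F L K : Type} [Field F] [Fintype F] [Field L] [Fintype L]
    [Field K] [Fintype K] (hn : 1 ≤ n) (hm : 1 ≤ m) (hK : Fintype.card K = Q)
    (φ : L →+* Matrix (Fin n) (Fin n) F) (hL : Nat.card L = Fintype.card F ^ n)
    (H : Subgroup (GL (Fin n) F)) (e : H ≃* GL (Fin m) K)
    (hH : ∀ z : GL (Fin n) F, (∀ h ∈ H, z * h = h * z) →
      ∀ x, (z : Matrix (Fin n) (Fin n) F) * φ x = φ x * z) :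
    Nat.card {x : L | x ^ Q = x} = Q ∧
    ∀ h ∈ H, ∀ x : L, x ^ Q = x → (h : Matrix (Fin n) (Fin n) F) * φ x = φ x * h := by
  classical
  have hQ : 1 < Q := by rw [← hK]; exact Fintype.one_lt_card
  have hZ : Nat.card (Subgroup.center H) = Q - 1 := by
    rw [← hK, ← card_center hm]
    exact Nat.card_congr (Subgroup.centerCongr e).toEquiv
  have hcomm : ∀ z : Subgroup.center H, ∀ h ∈ H, (z.1.1 : GL (Fin n) F) * h = h * z.1.1 := by
    intro z h hh
    exact (congrArg Subtype.val (Subgroup.mem_center_iff.1 z.2 ⟨h, hh⟩)).symm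
  have hex : ∀ z : Subgroup.center H, ∃ x, φ x = (z.1.1 : GL (Fin n) F) := fun z =>
    mem_of_comm hn φ hL _ (hH _ (hcomm z))
  choose ι hι using hex
  have : Nonempty (Fin n) := ⟨⟨0, hn⟩⟩
  have hφ : Function.Injective φ := φ.injective
  have hιQ : ∀ z, ι z ^ Q = ι z := by
    intro z
    have h1 : z ^ (Q - 1) = 1 := by rw [← hZ]; exact pow_card_eq_one'
    have h2 : ι z ^ (Q - 1) = 1 := by
      apply hφ
      rw [map_pow, hι, map_one]
      have := congrArg (fun z : Subgroup.center H => ((z.1.1 : GL (Fin n) F) : Matrix (Fin n) (Fin n) F)) h1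
      simpa using this
    have : Q = Q - 1 + 1 := by omega
    rw [this, pow_succ, h2, one_mul]
  let f : Option (Subgroup.center H) → L := fun o => o.elim 0 ι
  have hf : Function.Injective f := by
    have h0 : ∀ z, ι z ≠ 0 := by
      intro z h
      have := hι z
      rw [h, map_zero] at this
      exact z.1.1.ne_zero this.symm
    rintro (_ | a) (_ | b) h
    · rfl
    · exact absurd h.symm (h0 b)
    · exact absurd h (h0 a)
    · have h : ι a = ι b := h
      refine congrArg some (Subtype.ext (Subtype.ext (Units.ext ?_)))
      rw [← hι, ← hι, h]
  have hsub : Set.range f ⊆ {x : L | x ^ Q = x} := by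
    rintro _ ⟨(_ | a), rfl⟩
    · exact zero_pow (by omega)
    · exact hιQ a
  have hcf : (Set.range f).ncard = Q := by
    rw [← Nat.card_coe_set_eq, Nat.card_range_of_injective hf, Finite.card_option, hZ]
    omega
  have hroots : ({x : L | x ^ Q = x}).ncard ≤ Q := by
    have hne := FiniteField.X_pow_card_sub_X_ne_zero L hQ
    have hs : {x : L | x ^ Q = x} = ((Polynomial.X ^ Q - Polynomial.X : Polynomial L).roots.toFinset : Set L) := by
      ext x
      simp [Polynomial.mem_roots hne, sub_eq_zero]
    rw [hs, Set.ncard_coe_finset]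
    refine (Multiset.toFinset_card_le _).trans ((Polynomial.card_roots' _).trans ?_)
    rw [FiniteField.X_pow_card_sub_X_natDegree_eq L hQ]
  have heq : Set.range f = {x : L | x ^ Q = x} :=
    Set.eq_of_subset_of_ncard_le hsub (by omega) (Set.toFinite _)
  refine ⟨by rw [← heq, Nat.card_coe_set_eq, hcf], ?_⟩
  intro h hh x hx
  have : x ∈ Set.range f := heq ▸ hx
  obtain ⟨(_ | a), rfl⟩ := this
  · simp [f]
  · change _ * φ (ι a) = φ (ι a) * _
    rw [hι, ← Units.val_mul, ← Units.val_mul, hcomm a h hh]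

/-- If `S` is a Singer subgroup of `GL_n(F_q)` (cyclic of order `q^n - 1`),
`d ∣ n`, and `H₁, H₂` are subgroups of `GL_n(F_q)` containing `S`, each
isomorphic as an abstract group to `GL_{n/d}(F_{q^d})`, then `H₁ = H₂`. -/
theorem stmt_10 (q n d : ℕ) (hq : IsPrimePow q) (hn : 1 ≤ n) (hd : d ∣ n)
    (F : Type) [Field F] [Fintype F] (hF : Fintype.card F = q)
    (K : Type) [Field K] [Fintype K] (hK : Fintype.card K = q ^ d)
    (S H₁ H₂ : Subgroup (GL (Fin n) F))
    (hScyc : IsCyclic S) (hScard : Nat.card S = q ^ n - 1)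
    (hSH₁ : S ≤ H₁) (hSH₂ : S ≤ H₂)
    (h₁ : Nonempty (H₁ ≃* GL (Fin (n / d)) K))
    (h₂ : Nonempty (H₂ ≃* GL (Fin (n / d)) K)) :
    H₁ = H₂ := by
  classical
  obtain ⟨e₁⟩ := h₁
  obtain ⟨e₂⟩ := h₂
  obtain ⟨g, hg⟩ := (Subgroup.isCyclic_iff_exists_zpowers_eq_top S).1 hScyc
  subst hg
  obtain ⟨L, _, _, φ, hL, hφ⟩ := cardA hF hn g hScard
  have hm : 1 ≤ n / d := Nat.div_pos (Nat.le_of_dvd hn hd) (Nat.pos_of_dvd_of_pos hd hn)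
  have key : ∀ H : Subgroup (GL (Fin n) F), Subgroup.zpowers g ≤ H →
      ∀ z : GL (Fin n) F, (∀ h ∈ H, z * h = h * z) →
      ∀ x, (z : Matrix (Fin n) (Fin n) F) * φ x = φ x * z := by
    intro H hH z hz x
    obtain ⟨p, hp⟩ := hφ x
    rw [hp]
    have hc : Commute (z : Matrix (Fin n) (Fin n) F) g := by
      have := congrArg Units.val (hz g (hH (Subgroup.mem_zpowers g)))
      simpa [Commute, SemiconjBy] using this
    clear hp
    induction p using Polynomial.induction_on' with
    | add a b ha hb => rw [map_add, mul_add, add_mul, ha, hb]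
    | monomial k a =>
      rw [Polynomial.aeval_monomial]
      exact (Algebra.commute_algebraMap_right a (z : Matrix (Fin n) (Fin n) F)).mul_right
        (hc.pow_right k)
  subst hF
  obtain ⟨c1, k1⟩ := comm_fix hn hm hK φ hL H₁ e₁ (key H₁ hSH₁)
  obtain ⟨c2, k2⟩ := comm_fix hn hm hK φ hL H₂ e₂ (key H₂ hSH₂)
  obtain ⟨p, hpc⟩ := CharP.exists L
  have hp : p.Prime := CharP.char_is_prime L p
  have : Fact p.Prime := ⟨hp⟩
  have hpk : ∃ k, Fintype.card F ^ d = p ^ k := by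
    obtain ⟨a, _, ha⟩ := FiniteField.card L p
    rw [← Nat.card_eq_fintype_card, hL] at ha
    have hdn := pow_dvd_pow (Fintype.card F) (Nat.le_of_dvd hn hd)
    rw [ha] at hdn
    obtain ⟨k, -, hk⟩ := (Nat.dvd_prime_pow hp).1 hdn
    exact ⟨k, hk⟩
  obtain ⟨k, hk⟩ := hpk
  let E : Subfield L := RingHom.eqLocusField (iterateFrobenius L p k) (RingHom.id L)
  have hmE : ∀ x, x ∈ E ↔ x ^ (Fintype.card F ^ d) = x := by
    intro x
    rw [hk]
    exact Iff.rfl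
  have hEc : Nat.card E = Fintype.card F ^ d := by
    rw [← c1]
    exact Nat.card_congr (Equiv.subtypeEquivRight hmE)
  let C : Subgroup (GL (Fin n) F) :=
    { carrier := {c | ∀ x : E, (c : Matrix (Fin n) (Fin n) F) * φ x = φ x * c}
      mul_mem' := fun {a b} ha hb x => by
        rw [Units.val_mul, mul_assoc, hb, ← mul_assoc, ha, mul_assoc]
      one_mem' := fun x => by simp
      inv_mem' := fun {a} ha x => by
        have : Commute (a : Matrix (Fin n) (Fin n) F) (φ x) := ha x
        exact this.units_inv_left }
  have hCc := cardC (m := n / d) hEc hK (by rw [← pow_mul, Nat.mul_div_cancel' hd]) (φ.comp E.subtype) C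
    (fun c hc e => hc e)
  have i1 : H₁ = C := Subgroup.eq_of_le_of_card_ge (fun h hh x => k1 h hh x ((hmE _).1 x.2))
    (by rwa [Nat.card_congr e₁.toEquiv])
  have i2 : H₂ = C := Subgroup.eq_of_le_of_card_ge (fun h hh x => k2 h hh x ((hmE _).1 x.2))
    (by rwa [Nat.card_congr e₂.toEquiv])
  rw [i1, i2]
end

section
/- Let q be a prime power, n ≥ 1, and let d be a divisor of n. Suppose H ≤ GL_n(F_q) contains a cyclic subgroup S of order q^n − 1 and H is isomorphic as an abstract group to GL_{n/d}(F_{q^d}). Then the center Z(H) of H is contained in S, and |Z(H)| = q^d − 1; that is, Z(H) is the unique subgroup of the cyclic group S of order q^d − 1. -/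
open Matrix
open scoped MatrixGroups


open Polynomial in
lemma aux_closed (q n : ℕ) (hn : 1 ≤ n) (hq1 : 1 < q)
    (F : Type) [Field F] [Fintype F] (hF : Fintype.card F = q)
    (S : Subgroup (GL (Fin n) F))
    (hScyc : IsCyclic S) (hScard : Nat.card S = q ^ n - 1) (s t : S) :
    ((s : GL (Fin n) F) : Matrix (Fin n) (Fin n) F) - ((t : GL (Fin n) F) : Matrix (Fin n) (Fin n) F) = 0 ∨
    ∃ u : S, ((s : GL (Fin n) F) : Matrix (Fin n) (Fin n) F) - ((t : GL (Fin n) F) : Matrix (Fin n) (Fin n) F)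
      = ((u : GL (Fin n) F) : Matrix (Fin n) (Fin n) F) := by
  classical
  haveI : Nonempty (Fin n) := ⟨⟨0, hn⟩⟩
  obtain ⟨g, hg⟩ := hScyc.exists_monoid_generator
  set G : Matrix (Fin n) (Fin n) F := ((g : GL (Fin n) F) : Matrix (Fin n) (Fin n) F) with hG
  let M : Option S → Matrix (Fin n) (Fin n) F :=
    fun o => o.elim 0 (fun s => ((s : GL (Fin n) F) : Matrix (Fin n) (Fin n) F))
  have hMinj : Function.Injective M := by
    rintro (_ | a) (_ | b) h
    · rfl
    · exact absurd h.symm (b : GL (Fin n) F).ne_zero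
    · exact absurd h (a : GL (Fin n) F).ne_zero
    · exact congrArg some (Subtype.ext (Units.ext h))
  let f : degreeLT F n →ₗ[F] Matrix (Fin n) (Fin n) F :=
    (aeval G).toLinearMap ∘ₗ (degreeLT F n).subtype
  have hpow : ∀ s : S, ∃ p : degreeLT F n, f p = ((s : GL (Fin n) F) : Matrix (Fin n) (Fin n) F) := by
    intro s
    obtain ⟨k, hk⟩ := Submonoid.mem_powers_iff _ _ |>.1 (hg s)
    refine ⟨⟨X ^ k %ₘ G.charpoly, ?_⟩, ?_⟩
    · rw [mem_degreeLT]
      have := degree_modByMonic_lt (X ^ k) G.charpoly_monic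
      rwa [Matrix.charpoly_degree_eq_dim, Fintype.card_fin] at this
    · show aeval G (X ^ k %ₘ G.charpoly) = _
      rw [← Matrix.pow_eq_aeval_mod_charpoly, ← hk]
      simp [hG]
  have hsub : Set.range M ⊆ Set.range f := by
    rintro _ ⟨_ | s, rfl⟩
    · exact ⟨0, map_zero f⟩
    · exact hpow s
  have hpos : 1 ≤ q ^ n := Nat.one_le_pow _ _ (by omega)
  have hcardV : Nat.card (degreeLT F n) = q ^ n := by
    rw [Nat.card_congr (degreeLTEquiv F n).toEquiv]; simp [hF]
  haveI : Finite (degreeLT F n) := Finite.of_equiv _ (degreeLTEquiv F n).toEquiv.symm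
  have hEq : Set.range M = Set.range f := by
    apply Set.eq_of_subset_of_ncard_le hsub
    rw [← Nat.card_coe_set_eq, ← Nat.card_coe_set_eq, Nat.card_range_of_injective hMinj,
      Finite.card_option, hScard, Nat.sub_add_cancel hpos, ← hcardV]
    exact Finite.card_range_le f
  obtain ⟨p, hp⟩ := hpow s
  obtain ⟨r, hr⟩ := hpow t
  have : f (p - r) ∈ Set.range M := hEq ▸ ⟨_, rfl⟩
  rw [map_sub, hp, hr] at this
  obtain ⟨_ | u, hu⟩ := this
  · exact Or.inl hu.symm
  · exact Or.inr ⟨u, hu.symm⟩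

lemma aux_cent (q n : ℕ) (hn : 1 ≤ n) (hq1 : 1 < q)
    (F : Type) [Field F] [Fintype F] (hF : Fintype.card F = q)
    (S : Subgroup (GL (Fin n) F))
    (hScyc : IsCyclic S) (hScard : Nat.card S = q ^ n - 1) (c : GL (Fin n) F)
    (hc : ∀ s ∈ S, s * c = c * s) : c ∈ S := by
  classical
  let v : Fin n → F := fun _ => 1
  have hv : v ≠ 0 := fun h => one_ne_zero (congrFun h ⟨0, hn⟩)
  have hinj0 : ∀ (u : GL (Fin n) F) (w : Fin n → F), (u : Matrix (Fin n) (Fin n) F) *ᵥ w = 0 → w = 0 := by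
    intro u w h
    have := congrArg (fun x => ((u⁻¹ : GL (Fin n) F) : Matrix (Fin n) (Fin n) F) *ᵥ x) h
    simpa [Matrix.mulVec_mulVec, ← Units.val_mul] using this
  let N : Option S → (Fin n → F) :=
    fun o => o.elim 0 (fun s => ((s : GL (Fin n) F) : Matrix (Fin n) (Fin n) F) *ᵥ v)
  have hNinj : Function.Injective N := by
    rintro (_ | a) (_ | b) h
    · rfl
    · exact absurd (hinj0 _ _ h.symm) hv
    · exact absurd (hinj0 _ _ h) hv
    · have h' : ((a : GL (Fin n) F) : Matrix (Fin n) (Fin n) F) *ᵥ v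
        = ((b : GL (Fin n) F) : Matrix (Fin n) (Fin n) F) *ᵥ v := h
      rcases aux_closed q n hn hq1 F hF S hScyc hScard a b with h0 | ⟨u, hu⟩
      · exact congrArg some (Subtype.ext (Units.ext (sub_eq_zero.1 h0)))
      · exfalso
        apply hv
        apply hinj0 u
        rw [← hu, Matrix.sub_mulVec, h', sub_self]
  have hpos : 1 ≤ q ^ n := Nat.one_le_pow _ _ (by omega)
  have hbij : Function.Bijective N := by
    apply hNinj.bijective_of_nat_card_le
    rw [Finite.card_option, hScard, Nat.sub_add_cancel hpos]
    simp [hF]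
  have hsurj := hbij.2
  obtain ⟨_ | s, hs⟩ := hsurj ((c : Matrix (Fin n) (Fin n) F) *ᵥ v)
  · exact absurd (hinj0 _ _ hs.symm) hv
  have hs' : ((s : GL (Fin n) F) : Matrix (Fin n) (Fin n) F) *ᵥ v
    = (c : Matrix (Fin n) (Fin n) F) *ᵥ v := hs
  have : c = s := by
    apply Units.ext
    apply Matrix.mulVec_injective
    funext w
    obtain ⟨_ | a, rfl⟩ := hsurj w
    · show _ *ᵥ (0 : Fin n → F) = _ *ᵥ (0 : Fin n → F)
      simp
    · show _ *ᵥ (((a : GL (Fin n) F) : Matrix (Fin n) (Fin n) F) *ᵥ v)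
        = _ *ᵥ (((a : GL (Fin n) F) : Matrix (Fin n) (Fin n) F) *ᵥ v)
      have hcomm : (s : GL (Fin n) F) * a = a * s := by
        letI := hScyc.commGroup
        exact congrArg Subtype.val (mul_comm s a)
      rw [Matrix.mulVec_mulVec, Matrix.mulVec_mulVec, ← Units.val_mul, ← Units.val_mul,
        ← hc a a.2, hcomm, Units.val_mul, Units.val_mul, ← Matrix.mulVec_mulVec,
        ← Matrix.mulVec_mulVec, hs']
  exact this ▸ s.2

/-- If `H ≤ GL_n(F_q)` contains a cyclic subgroup `S` of order `q^n - 1` and `H`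
is isomorphic as an abstract group to `GL_{n/d}(F_{q^d})` (`d ∣ n`), then the
center of `H` is contained in `S` and has order `q^d - 1`. -/
theorem stmt_11 (q n d : ℕ) (hq : IsPrimePow q) (hn : 1 ≤ n) (hd : d ∣ n)
    (F : Type) [Field F] [Fintype F] (hF : Fintype.card F = q)
    (K : Type) [Field K] [Fintype K] (hK : Fintype.card K = q ^ d)
    (S H : Subgroup (GL (Fin n) F))
    (hScyc : IsCyclic S) (hScard : Nat.card S = q ^ n - 1)
    (hSH : S ≤ H)
    (hiso : Nonempty (H ≃* GL (Fin (n / d)) K)) :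
    (Subgroup.center H).map H.subtype ≤ S ∧
      Nat.card (Subgroup.center H) = q ^ d - 1 := by
  obtain ⟨e⟩ := hiso
  refine ⟨?_, ?_⟩
  · rintro _ ⟨z, hz, rfl⟩
    refine aux_cent q n hn hq.one_lt F hF S hScyc hScard _ ?_
    intro s hs
    exact congrArg Subtype.val (Subgroup.mem_center_iff.1 hz ⟨s, hSH hs⟩)
  · have hm : 0 < n / d := Nat.div_pos (Nat.le_of_dvd hn hd) (Nat.pos_of_dvd_of_pos hd hn)
    haveI : Nonempty (Fin (n / d)) := ⟨⟨0, hm⟩⟩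
    classical
    rw [Nat.card_congr (Subgroup.centerCongr e).toEquiv,
      Matrix.GeneralLinearGroup.center_eq_range_scalar]
    have hinj : Function.Injective (Matrix.GeneralLinearGroup.scalar (Fin (n / d)) : Kˣ →* _) := by
      intro a b h
      have := congrArg (fun x : GL (Fin (n / d)) K => (x : Matrix (Fin (n / d)) (Fin (n / d)) K) ⟨0, hm⟩ ⟨0, hm⟩) h
      exact Units.ext (by simpa using this)
    rw [← Nat.card_congr (MonoidHom.ofInjective hinj).toEquiv, Nat.card_units,
      Nat.card_eq_fintype_card, hK]
end

section
/- Let q be a prime power and let L be a proper subgroup of GL_2(F_q) containing a cyclic subgroup S of order q^2 − 1. Then S is a normal subgroup of L and the index [L : S] is at most 2. -/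
open Matrix
open scoped MatrixGroups

namespace Stmt14

variable {F : Type} [Field F] [Fintype F]

lemma arith (q n f t u m : ℕ) (hq : 2 ≤ q) (hf1 : 1 ≤ f) (hf2 : f ≤ 2)
    (hn : n = f + (q + 1) * t) (hum : n = u * m) (hu : u ∣ q) (hm : m ≤ q - 1)
    (hmu : u ≠ 1 → m ≤ u - 1) : n ≤ 2 ∨ n = q * (q - 1) := by
  obtain ⟨v, rfl⟩ := hu
  by_cases h1 : u = 1
  · subst h1
    left
    rcases Nat.eq_zero_or_pos t with rfl | ht
    · omega
    · exfalso
      have : (1 * v + 1) * 1 ≤ (1 * v + 1) * t := Nat.mul_le_mul_left _ ht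
      omega
  · have hm' := hmu h1
    have hupos : 0 < u := by
      rcases Nat.eq_zero_or_pos u with rfl | h
      · omega
      · exact h
    have hvpos : 0 < v := by
      rcases Nat.eq_zero_or_pos v with rfl | h
      · omega
      · exact h
    have hd : u ∣ f + t := by
      have h2 : u ∣ u * (v * t) + (f + t) := ⟨m, by rw [← hum, hn]; ring⟩
      exact (Nat.dvd_add_right ⟨_, rfl⟩).1 h2
    obtain ⟨s, hs⟩ := hd
    have hms : v * t + s = m := by
      apply Nat.eq_of_mul_eq_mul_left hupos
      rw [← hum, hn, mul_add, ← hs]; ring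
    have hspos : 0 < s := by
      rcases Nat.eq_zero_or_pos s with rfl | h
      · omega
      · exact h
    have hvt : t ≤ v * t := Nat.le_mul_of_pos_left _ hvpos
    have hs1 : s = 1 := by
      by_contra hne
      have : u * 2 ≤ u * s := Nat.mul_le_mul_left _ (by omega)
      omega
    subst hs1
    rcases Nat.eq_zero_or_pos t with rfl | ht
    · left; omega
    · right
      have hv1 : v = 1 := by
        by_contra hne
        have : 2 * t ≤ v * t := Nat.mul_le_mul_right _ (by omega)
        omega
      subst hv1
      rw [hum]
      simp only [mul_one]
      congr 1
      omega

lemma pow_form (s : Matrix (Fin 2) (Fin 2) F) (n : ℕ) :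
    ∃ a b : F, s ^ n = a • (1 : Matrix (Fin 2) (Fin 2) F) + b • s := by
  have hss : s * s = (- s.det) • (1 : Matrix (Fin 2) (Fin 2) F) + s.trace • s := by
    ext i j
    fin_cases i <;> fin_cases j <;>
      simp [Matrix.mul_apply, Fin.sum_univ_two, Matrix.det_fin_two, Matrix.trace_fin_two] <;> ring
  induction n with
  | zero => exact ⟨1, 0, by simp⟩
  | succ n ih =>
    obtain ⟨a, b, h⟩ := ih
    refine ⟨- b * s.det, a + b * s.trace, ?_⟩
    rw [pow_succ, h, add_mul, smul_mul_assoc, smul_mul_assoc, hss, one_mul]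
    module

lemma singer (S : Subgroup (GL (Fin 2) F)) (hScyc : IsCyclic S)
    (hScard : Nat.card S = Fintype.card F ^ 2 - 1) :
    ∃ s ∈ S, (∀ g ∈ S, ∃ a b : F, (g : Matrix (Fin 2) (Fin 2) F) = a • 1 + b • s.1) ∧
      (∀ a b : F, (a, b) ≠ 0 → ∃ g ∈ S, (g : Matrix (Fin 2) (Fin 2) F) = a • 1 + b • s.1) := by
  classical
  obtain ⟨⟨s, hs⟩, hgen⟩ := hScyc.exists_generator
  have h1 : ∀ g ∈ S, ∃ a b : F, (g : Matrix (Fin 2) (Fin 2) F) = a • 1 + b • s.1 := by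
    intro g hg
    have h := hgen ⟨g, hg⟩
    rw [← mem_powers_iff_mem_zpowers] at h
    obtain ⟨n, hn⟩ := h
    have hn' : s ^ n = g := congrArg Subtype.val hn
    obtain ⟨a, b, h⟩ := pow_form s.1 n
    exact ⟨a, b, by rw [← hn', ← h]; rfl⟩
  refine ⟨s, hs, h1, ?_⟩
  choose! a b hab using h1
  let φ : S → {x : F × F // x ≠ 0} := fun g => ⟨(a g, b g), by
    intro h0
    have h := hab g g.2
    simp only [Prod.mk_eq_zero] at h0
    rw [h0.1, h0.2] at h
    simp at h
    ⟩
  have hinj : Function.Injective φ := by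
    intro g g' h
    have h2 : (a g, b g) = (a g', b g') := congrArg Subtype.val h
    simp only [Prod.mk.injEq] at h2
    apply Subtype.ext
    apply Units.ext
    rw [hab g g.2, hab g' g'.2, h2.1, h2.2]
  have hcard : Nat.card S = Nat.card {x : F × F // x ≠ 0} := by
    rw [hScard, Nat.card_eq_fintype_card, Fintype.card_subtype_compl]
    simp [sq]
  have hbij := (Nat.bijective_iff_injective_and_card φ).2 ⟨hinj, hcard⟩
  intro x y hxy
  obtain ⟨g, hg⟩ := hbij.2 ⟨(x, y), hxy⟩
  have h2 : (a g, b g) = (x, y) := congrArg Subtype.val hg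
  simp only [Prod.mk.injEq] at h2
  exact ⟨g, g.2, by rw [hab g g.2, h2.1, h2.2]⟩

lemma gl_inj (g : GL (Fin 2) F) (v : Fin 2 → F) (h : g.1 *ᵥ v = 0) : v = 0 := by
  have : (g⁻¹).1 *ᵥ (g.1 *ᵥ v) = v := by
    rw [Matrix.mulVec_mulVec, ← Units.val_mul]; simp
  rw [← this, h]; simp

/-- stabilizer of the first basis vector -/
def st : Subgroup (GL (Fin 2) F) where
  carrier := {g | g.1 *ᵥ ![1, 0] = ![1, 0]}
  mul_mem' := by
    intro a b ha hb
    simp only [Set.mem_setOf_eq] at *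
    rw [Units.val_mul, ← Matrix.mulVec_mulVec, hb, ha]
  one_mem' := by simp
  inv_mem' := by
    intro a ha
    simp only [Set.mem_setOf_eq] at *
    conv_lhs => rw [← ha]
    rw [Matrix.mulVec_mulVec, ← Units.val_mul]; simp

lemma st_entries {g : GL (Fin 2) F} (h : g ∈ st) : g.1 0 0 = 1 ∧ g.1 1 0 = 0 := by
  have h' : g.1 *ᵥ ![1, 0] = ![1, 0] := h
  have h0 := congrFun h' 0
  have h1 := congrFun h' 1
  simp [Matrix.mulVec, dotProduct, Fin.sum_univ_two] at h0 h1
  exact ⟨h0, h1⟩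

lemma st_det {g : GL (Fin 2) F} (h : g ∈ st) : g.1.det = g.1 1 1 := by
  rw [Matrix.det_fin_two, (st_entries h).1, (st_entries h).2]; ring

lemma st_num (H : Subgroup (GL (Fin 2) F)) (hH : H ≤ st) :
    ∃ u m : ℕ, Nat.card H = u * m ∧ u ∣ Fintype.card F ∧ m ≤ Fintype.card F - 1 ∧
      (u ≠ 1 → m ≤ u - 1) := by
  classical
  let δ : H →* Fˣ := (Matrix.GeneralLinearGroup.det).comp H.subtype
  have hδ : ∀ h : H, ((δ h : Fˣ) : F) = h.1.1 1 1 := by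
    intro h
    rw [← st_det (hH h.2)]; rfl
  have hker : ∀ k : δ.ker, k.1.1.1 1 1 = 1 := by
    intro k
    rw [← hδ k.1, (MonoidHom.mem_ker).1 k.2]; rfl
  have hkext : ∀ k k' : δ.ker, k.1.1.1 0 1 = k'.1.1.1 0 1 → k = k' := by
    intro k k' h
    apply Subtype.ext
    apply Subtype.ext
    apply Units.ext
    ext i j
    have e1 := st_entries (hH k.1.2)
    have e2 := st_entries (hH k'.1.2)
    fin_cases i <;> fin_cases j
    · exact e1.1.trans e2.1.symm
    · exact h
    · exact e1.2.trans e2.2.symm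
    · exact (hker k).trans (hker k').symm
  refine ⟨Nat.card δ.ker, Nat.card δ.range, ?_, ?_, ?_, ?_⟩
  · rw [← Subgroup.index_ker, Subgroup.card_mul_index]
  · let ψ : δ.ker →* Multiplicative F :=
      { toFun := fun k => Multiplicative.ofAdd (k.1.1.1 0 1)
        map_one' := by simp
        map_mul' := by
          intro k k'
          rw [← ofAdd_add]
          congr 1
          have : (k * k').1.1.1 0 1 = (k.1.1.1 * k'.1.1.1) 0 1 := rfl
          rw [this, Matrix.mul_apply, Fin.sum_univ_two, (st_entries (hH k.1.2)).1, hker k']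
          ring }
    have : Nat.card δ.ker ∣ Nat.card (Multiplicative F) := by
      apply Subgroup.card_dvd_of_injective ψ
      intro k k' h
      exact hkext k k' h
    rw [← Nat.card_eq_fintype_card]
    exact this
  · rw [← Fintype.card_units, ← Nat.card_eq_fintype_card]
    exact Nat.card_le_card_of_injective (Subtype.val) Subtype.val_injective
  · intro hu
    have hnt : Nontrivial δ.ker := by
      rw [← not_subsingleton_iff_nontrivial]
      intro hs
      exact hu (Nat.card_eq_one_iff_unique.2 ⟨hs, ⟨1⟩⟩)
    obtain ⟨w, hw⟩ := exists_ne (1 : δ.ker)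
    have hc : w.1.1.1 0 1 ≠ 0 := by
      intro h
      apply hw
      apply hkext
      rw [h]; simp
    have hch : ∀ d : δ.range, ∃ h : H, δ h = d.1 := fun d => d.2
    choose h hh using hch
    let θ : δ.range → {k : δ.ker // k ≠ 1} := fun d =>
      ⟨⟨h d * w.1 * (h d)⁻¹, (MonoidHom.normal_ker δ).conj_mem w.1 w.2 (h d)⟩, by
        intro h1
        have h2 : h d * w.1 * (h d)⁻¹ = 1 := congrArg Subtype.val h1
        apply hw
        apply Subtype.ext
        simpa [mul_inv_eq_one] using h2⟩
    have key : ∀ d, (θ d).1.1.1.1 0 1 * (d.1 : F) = w.1.1.1 0 1 := by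
      intro d
      have e : (θ d).1.1 * h d = h d * w.1 := by
        show h d * w.1 * (h d)⁻¹ * h d = h d * w.1
        group
      have e2 : ((θ d).1.1.1.1 * (h d).1.1) 0 1 = ((h d).1.1 * w.1.1.1) 0 1 :=
        congrArg (fun x : H => x.1.1 0 1) e
      rw [Matrix.mul_apply, Matrix.mul_apply, Fin.sum_univ_two, Fin.sum_univ_two,
        (st_entries (hH (h d).2)).1, (st_entries (hH (θ d).1.1.2)).1, hker w, ← hδ (h d), hh d] at e2
      linear_combination e2
    have hθ : Function.Injective θ := by
      intro d d' hd
      have k1 := key d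
      have k2 := key d'
      rw [hd, ← k2] at k1
      apply Subtype.ext
      apply Units.ext
      refine mul_left_cancel₀ ?_ k1
      intro h0
      rw [h0, zero_mul] at k2
      exact hc k2.symm
    have := Nat.card_le_card_of_injective θ hθ
    rwa [Nat.card_eq_fintype_card (α := {k : δ.ker // k ≠ 1}), Fintype.card_subtype_compl,
      Fintype.card_subtype_eq, ← Nat.card_eq_fintype_card] at this

lemma span_form (S : Subgroup (GL (Fin 2) F)) (s : GL (Fin 2) F)
    (h2 : ∀ a b : F, (a, b) ≠ 0 → ∃ g ∈ S, (g : Matrix (Fin 2) (Fin 2) F) = a • 1 + b • s.1)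
    (v : Fin 2 → F) (hv : v ≠ 0) (w : Fin 2 → F) :
    ∃ a b : F, w = a • v + b • (s.1 *ᵥ v) := by
  classical
  let φ : F × F → (Fin 2 → F) := fun x => x.1 • v + x.2 • (s.1 *ᵥ v)
  have hinj : Function.Injective φ := by
    intro x y hxy
    by_contra hne
    have hne' : (x.1 - y.1, x.2 - y.2) ≠ 0 := by
      intro h
      apply hne
      simp only [Prod.mk_eq_zero, sub_eq_zero] at h
      exact Prod.ext h.1 h.2
    obtain ⟨g, -, hg⟩ := h2 _ _ hne'
    apply hv
    apply gl_inj g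
    have hxy' : x.1 • v + x.2 • (s.1 *ᵥ v) = y.1 • v + y.2 • (s.1 *ᵥ v) := hxy
    rw [hg, Matrix.add_mulVec, Matrix.smul_mulVec, Matrix.smul_mulVec, Matrix.one_mulVec,
      sub_smul, sub_smul]
    rw [← sub_eq_zero] at hxy'
    rw [← hxy']
    abel
  have hcard : Nat.card (F × F) = Nat.card (Fin 2 → F) := by
    simp [Nat.card_eq_fintype_card, sq]
  obtain ⟨x, hx⟩ := ((Nat.bijective_iff_injective_and_card φ).2 ⟨hinj, hcard⟩).2 w
  exact ⟨x.1, x.2, hx.symm⟩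

lemma trans_form (S : Subgroup (GL (Fin 2) F)) (s : GL (Fin 2) F)
    (h2 : ∀ a b : F, (a, b) ≠ 0 → ∃ g ∈ S, (g : Matrix (Fin 2) (Fin 2) F) = a • 1 + b • s.1)
    (v : Fin 2 → F) (hv : v ≠ 0) (w : Fin 2 → F) (hw : w ≠ 0) :
    ∃ g ∈ S, g.1 *ᵥ v = w := by
  obtain ⟨a, b, hab⟩ := span_form S s h2 v hv w
  have hne : (a, b) ≠ 0 := by
    intro h
    simp only [Prod.mk_eq_zero] at h
    apply hw
    rw [hab, h.1, h.2]; simp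
  obtain ⟨g, hg, h⟩ := h2 a b hne
  refine ⟨g, hg, ?_⟩
  rw [h, Matrix.add_mulVec, Matrix.smul_mulVec, Matrix.smul_mulVec, Matrix.one_mulVec, hab]

lemma e_ne : (![1, 0] : Fin 2 → F) ≠ 0 := by
  intro h
  have := congrFun h 0
  simp at this

lemma free_form (S : Subgroup (GL (Fin 2) F)) (s : GL (Fin 2) F)
    (h1 : ∀ g ∈ S, ∃ a b : F, (g : Matrix (Fin 2) (Fin 2) F) = a • 1 + b • s.1)
    (h2 : ∀ a b : F, (a, b) ≠ 0 → ∃ g ∈ S, (g : Matrix (Fin 2) (Fin 2) F) = a • 1 + b • s.1)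
    (g : GL (Fin 2) F) (hg : g ∈ S) (hst : g ∈ st) : g = 1 := by
  obtain ⟨a, b, h⟩ := h1 g hg
  have hst' : g.1 *ᵥ ![1, 0] = ![1, 0] := hst
  by_cases hne : (a - 1, b) = 0
  · simp only [Prod.mk_eq_zero, sub_eq_zero] at hne
    apply Units.ext
    rw [h, hne.1, hne.2]; simp
  · exfalso
    obtain ⟨x, -, hx⟩ := h2 _ _ hne
    apply e_ne (F := F)
    apply gl_inj x
    have : x.1 = g.1 - 1 := by rw [hx, h]; module
    rw [this, Matrix.sub_mulVec, hst', Matrix.one_mulVec, sub_self]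

lemma index_eq (L S : Subgroup (GL (Fin 2) F)) (hSL : S ≤ L) (s : GL (Fin 2) F)
    (h1 : ∀ g ∈ S, ∃ a b : F, (g : Matrix (Fin 2) (Fin 2) F) = a • 1 + b • s.1)
    (h2 : ∀ a b : F, (a, b) ≠ 0 → ∃ g ∈ S, (g : Matrix (Fin 2) (Fin 2) F) = a • 1 + b • s.1) :
    (S.subgroupOf L).index = Nat.card (L ⊓ st : Subgroup (GL (Fin 2) F)) := by
  symm
  let φ : (L ⊓ st : Subgroup (GL (Fin 2) F)) → L ⧸ S.subgroupOf L :=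
    fun h => QuotientGroup.mk ⟨h.1, h.2.1⟩
  refine Nat.card_eq_of_bijective φ ⟨?_, ?_⟩
  · intro x y hxy
    have h := QuotientGroup.eq.1 hxy
    rw [Subgroup.mem_subgroupOf] at h
    have h' : x.1⁻¹ * y.1 ∈ S := h
    have := free_form S s h1 h2 _ h' (st.mul_mem (st.inv_mem x.2.2) y.2.2)
    apply Subtype.ext
    exact inv_mul_eq_one.1 this
  · intro y
    obtain ⟨g, rfl⟩ := QuotientGroup.mk_surjective y
    obtain ⟨x, hx, hxe⟩ := trans_form S s h2 ![1, 0] e_ne ((g.1⁻¹).1 *ᵥ ![1, 0])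
      (fun h => e_ne (F := F) (gl_inj _ _ h))
    refine ⟨⟨g.1 * x, L.mul_mem g.2 (hSL hx), ?_⟩, ?_⟩
    · show (g.1 * x).1 *ᵥ ![1, 0] = ![1, 0]
      rw [Units.val_mul, ← Matrix.mulVec_mulVec, hxe, Matrix.mulVec_mulVec, ← Units.val_mul]
      simp
    · apply QuotientGroup.eq.2
      rw [Subgroup.mem_subgroupOf]
      show (g.1 * x)⁻¹ * g.1 ∈ S
      have : (g.1 * x)⁻¹ * g.1 = x⁻¹ := by group
      rw [this]
      exact S.inv_mem hx

lemma comm_form (S : Subgroup (GL (Fin 2) F)) (s : GL (Fin 2) F)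
    (h1 : ∀ g ∈ S, ∃ a b : F, (g : Matrix (Fin 2) (Fin 2) F) = a • 1 + b • s.1)
    (x : GL (Fin 2) F) (hx : x ∈ S) : x * s = s * x := by
  obtain ⟨a, b, h⟩ := h1 x hx
  apply Units.ext
  rw [Units.val_mul, Units.val_mul, h, add_mul, mul_add]
  simp

lemma centr (S : Subgroup (GL (Fin 2) F)) (s : GL (Fin 2) F)
    (h1 : ∀ g ∈ S, ∃ a b : F, (g : Matrix (Fin 2) (Fin 2) F) = a • 1 + b • s.1)
    (h2 : ∀ a b : F, (a, b) ≠ 0 → ∃ g ∈ S, (g : Matrix (Fin 2) (Fin 2) F) = a • 1 + b • s.1)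
    (c : GL (Fin 2) F) (hc : c * s = s * c) : c ∈ S := by
  obtain ⟨x, hx, hxe⟩ := trans_form S s h2 ![1, 0] e_ne (c.1 *ᵥ ![1, 0])
      (fun h => e_ne (F := F) (gl_inj _ _ h))
  have hcx : x * s = s * x := comm_form S s h1 x hx
  have hse : x.1 *ᵥ (s.1 *ᵥ ![1, 0]) = c.1 *ᵥ (s.1 *ᵥ ![1, 0]) := by
    rw [Matrix.mulVec_mulVec, Matrix.mulVec_mulVec, ← Units.val_mul, ← Units.val_mul, hcx, hc,
      Units.val_mul, Units.val_mul, ← Matrix.mulVec_mulVec, ← Matrix.mulVec_mulVec, hxe]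
  have : x = c := by
    apply Units.ext
    apply Matrix.toLin'.injective
    apply LinearMap.ext
    intro w
    obtain ⟨a, b, rfl⟩ := span_form S s h2 ![1, 0] e_ne w
    simp only [Matrix.toLin'_apply, Matrix.mulVec_add, Matrix.mulVec_smul]
    rw [hxe, hse]
  exact this ▸ hx

/-- conjugates of `s` inside the torus -/
lemma conj_root (S : Subgroup (GL (Fin 2) F)) (s : GL (Fin 2) F) (hs : s ∈ S)
    (h1 : ∀ g ∈ S, ∃ a b : F, (g : Matrix (Fin 2) (Fin 2) F) = a • 1 + b • s.1)
    (h2 : ∀ a b : F, (a, b) ≠ 0 → ∃ g ∈ S, (g : Matrix (Fin 2) (Fin 2) F) = a • 1 + b • s.1)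
    (g : GL (Fin 2) F) (hg : g⁻¹ * s * g ∈ S) (hne : g⁻¹ * s * g ≠ s) :
    (g⁻¹ * s * g).1 = s.1.trace • 1 - s.1 := by
  have ch : ∀ t : Matrix (Fin 2) (Fin 2) F, t * t = t.trace • t - t.det • 1 := by
    intro t
    ext i j
    fin_cases i <;> fin_cases j <;>
      simp [Matrix.mul_apply, Fin.sum_univ_two, Matrix.det_fin_two, Matrix.trace_fin_two] <;> ring
  set t := g⁻¹ * s * g with ht
  have hcm : t.1 * s.1 = s.1 * t.1 := by
    rw [← Units.val_mul, ← Units.val_mul, comm_form S s h1 t hg]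
  have htr : t.1.trace = s.1.trace := by
    have : t.1 = (g⁻¹).1 * s.1 * g.1 := rfl
    rw [this, Matrix.trace_mul_comm, ← mul_assoc, ← Units.val_mul]
    simp
  have hdet : t.1.det = s.1.det := by
    have : t.1 = (g⁻¹).1 * s.1 * g.1 := rfl
    rw [this, Matrix.det_mul, Matrix.det_mul, mul_right_comm, ← Matrix.det_mul, ← Units.val_mul]
    simp
  have hmul : (t.1 - s.1) * (t.1 - (s.1.trace • 1 - s.1)) = 0 := by
    have e1 := ch t.1
    have e2 := ch s.1
    rw [htr, hdet] at e1
    have : (t.1 - s.1) * (t.1 - (s.1.trace • 1 - s.1)) =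
        t.1 * t.1 - s.1.trace • t.1 + t.1 * s.1 - s.1 * t.1 + s.1.trace • s.1 - s.1 * s.1 := by
      simp only [sub_mul, mul_sub, mul_smul_comm, mul_one, smul_sub]
      abel
    rw [this, e1, e2, hcm]
    abel
  obtain ⟨a, b, hab⟩ := h1 t hg
  have hne2 : (a, b - 1) ≠ 0 := by
    intro h
    simp only [Prod.mk_eq_zero, sub_eq_zero] at h
    apply hne
    apply Units.ext
    rw [hab, h.1, h.2]; simp
  obtain ⟨x, -, hx⟩ := h2 _ _ hne2
  have hx' : x.1 = t.1 - s.1 := by rw [hx, hab]; module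
  rw [← hx'] at hmul
  have := (Units.mul_right_eq_zero x).1 hmul
  exact sub_eq_zero.1 this

lemma action_count {G X : Type} [Group G] [MulAction G X] [Finite X] (k : ℕ)
    (h : ∀ x : X, x ∉ MulAction.fixedPoints G X → (MulAction.orbit G x).ncard = k) :
    ∃ t, Nat.card X = Nat.card (MulAction.fixedPoints G X) + k * t := by
  classical
  have := Fintype.ofFinite X
  let N : Finset X := Finset.univ.filter (fun x => x ∉ MulAction.fixedPoints G X)
  let P : Finset X := Finset.univ.filter (fun x => x ∈ MulAction.fixedPoints G X)
  have hPN : P.card + N.card = Fintype.card X :=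
    Finset.card_filter_add_card_filter_not _
  have hP : Nat.card (MulAction.fixedPoints G X) = P.card := by
    rw [Nat.card_eq_fintype_card, Fintype.card_subtype]
  let f : X → Set X := fun x => MulAction.orbit G x
  have hN : N.card = (N.image f).card * k := by
    rw [Finset.card_eq_sum_card_image f N]
    apply Finset.sum_const_nat
    intro o ho
    obtain ⟨x, hx, rfl⟩ := Finset.mem_image.1 ho
    have hx' : x ∉ MulAction.fixedPoints G X := (Finset.mem_filter.1 hx).2
    rw [← h x hx', ← Set.ncard_coe_finset]
    congr 1
    ext y
    simp only [N, f, Finset.coe_filter, Finset.mem_filter, Finset.mem_univ, true_and]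
    constructor
    · rintro ⟨-, hy⟩
      rw [← hy]; exact MulAction.mem_orbit_self y
    · intro hy
      have e := MulAction.orbit_eq_iff.2 hy
      refine ⟨?_, e⟩
      intro hf
      apply hx'
      have hxy : x ∈ MulAction.orbit G y := by rw [e]; exact MulAction.mem_orbit_self x
      obtain ⟨g, hg⟩ := hxy
      have : y = x := by rw [← hg]; exact (hf g).symm
      exact this ▸ hf
  refine ⟨(N.image f).card, ?_⟩
  rw [hP, Nat.card_eq_fintype_card, ← hPN, hN, mul_comm k]

lemma smul_mk_iff (L S : Subgroup (GL (Fin 2) F)) (y : S.subgroupOf L) (g : L) :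
    y • (QuotientGroup.mk g : L ⧸ S.subgroupOf L) = QuotientGroup.mk g ↔
      g.1⁻¹ * y.1.1 * g.1 ∈ S := by
  have : y • (QuotientGroup.mk g : L ⧸ S.subgroupOf L) = QuotientGroup.mk (y.1 * g) := rfl
  rw [this, eq_comm, QuotientGroup.eq, Subgroup.mem_subgroupOf]
  simp [mul_assoc]

lemma fixed_of (L S : Subgroup (GL (Fin 2) F)) (s : GL (Fin 2) F)
    (h1 : ∀ g ∈ S, ∃ a b : F, (g : Matrix (Fin 2) (Fin 2) F) = a • 1 + b • s.1)
    (h2 : ∀ a b : F, (a, b) ≠ 0 → ∃ g ∈ S, (g : Matrix (Fin 2) (Fin 2) F) = a • 1 + b • s.1)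
    (g : L) (y : GL (Fin 2) F) (a b : F) (hb : b ≠ 0) (hy : y.1 = a • 1 + b • s.1)
    (hyS : g.1⁻¹ * y * g.1 ∈ S) :
    (QuotientGroup.mk g : L ⧸ S.subgroupOf L) ∈
      MulAction.fixedPoints (S.subgroupOf L) (L ⧸ S.subgroupOf L) := by
  intro z
  rw [smul_mk_iff]
  obtain ⟨c, d, hz⟩ := h1 z.1.1 (Subgroup.mem_subgroupOf.1 z.2)
  obtain ⟨c', d', hy'⟩ := h1 _ hyS
  have hyy : (g.1⁻¹ * y * g.1).1 = (g.1⁻¹).1 * y.1 * g.1.1 := rfl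
  have hzz : (g.1⁻¹ * z.1.1 * g.1).1 = (g.1⁻¹).1 * z.1.1.1 * g.1.1 := rfl
  have hgg : (g.1⁻¹).1 * g.1.1 = 1 := by rw [← Units.val_mul]; simp
  have e : z.1.1.1 = (c - d * b⁻¹ * a) • 1 + (d * b⁻¹) • y.1 := by
    rw [hz, hy, smul_add, smul_smul, smul_smul, mul_assoc d b⁻¹ b, inv_mul_cancel₀ hb, mul_one]
    module
  have e2 : (g.1⁻¹ * z.1.1 * g.1).1 =
      (c - d * b⁻¹ * a + d * b⁻¹ * c') • 1 + (d * b⁻¹ * d') • s.1 := by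
    rw [hzz, e, mul_add, add_mul, mul_smul_comm, mul_smul_comm, smul_mul_assoc, smul_mul_assoc,
      ← hyy, hy', mul_one, hgg]
    module
  have hne : (c - d * b⁻¹ * a + d * b⁻¹ * c', d * b⁻¹ * d') ≠ 0 := by
    intro h
    simp only [Prod.mk_eq_zero] at h
    rw [h.1, h.2] at e2
    simp only [zero_smul, add_zero] at e2
    exact Units.ne_zero _ e2
  obtain ⟨x, hx, hxe⟩ := h2 _ _ hne
  have : x = g.1⁻¹ * z.1.1 * g.1 := Units.ext (by rw [hxe, e2])
  exact this ▸ hx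

lemma orbit_card (L S : Subgroup (GL (Fin 2) F)) (hSL : S ≤ L) (s : GL (Fin 2) F)
    (hScard : Nat.card S = Fintype.card F ^ 2 - 1)
    (h1 : ∀ g ∈ S, ∃ a b : F, (g : Matrix (Fin 2) (Fin 2) F) = a • 1 + b • s.1)
    (h2 : ∀ a b : F, (a, b) ≠ 0 → ∃ g ∈ S, (g : Matrix (Fin 2) (Fin 2) F) = a • 1 + b • s.1)
    (x : L ⧸ S.subgroupOf L)
    (hx : x ∉ MulAction.fixedPoints (S.subgroupOf L) (L ⧸ S.subgroupOf L)) :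
    (MulAction.orbit (S.subgroupOf L) x).ncard = Fintype.card F + 1 := by
  classical
  obtain ⟨g, rfl⟩ := QuotientGroup.mk_surjective x
  have hsc : ∀ a : Fˣ, ∃ z ∈ S, z.1 = a.1 • (1 : Matrix (Fin 2) (Fin 2) F) := by
    intro a
    obtain ⟨z, hz, h⟩ := h2 a.1 0 (by simp)
    exact ⟨z, hz, by rw [h]; simp⟩
  choose z hzS hz using hsc
  have hconj : ∀ a, g.1⁻¹ * z a * g.1 = z a := by
    intro a
    have : z a * g.1 = g.1 * z a := by
      apply Units.ext
      rw [Units.val_mul, Units.val_mul, hz]; simp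
    rw [mul_assoc, this]; group
  let φ : Fˣ → MulAction.stabilizer (S.subgroupOf L) (QuotientGroup.mk g : L ⧸ S.subgroupOf L) :=
    fun a => ⟨⟨⟨z a, hSL (hzS a)⟩, Subgroup.mem_subgroupOf.2 (hzS a)⟩, by
      rw [MulAction.mem_stabilizer_iff, smul_mk_iff]
      show g.1⁻¹ * z a * g.1 ∈ S
      rw [hconj]; exact hzS a⟩
  have hbij : Function.Bijective φ := by
    constructor
    · intro a b hab
      have e : z a = z b := congrArg (fun y => y.1.1.1) hab
      have e2 := congrArg (fun y : GL (Fin 2) F => y.1 0 0) e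
      simp only [hz] at e2
      apply Units.ext
      simpa using e2
    · rintro ⟨y, hy⟩
      rw [MulAction.mem_stabilizer_iff, smul_mk_iff] at hy
      obtain ⟨a, b, hab⟩ := h1 y.1.1 (Subgroup.mem_subgroupOf.1 y.2)
      have hb : b = 0 := by
        by_contra hb
        exact hx (fixed_of L S s h1 h2 g y.1.1 a b hb hab hy)
      have ha : a ≠ 0 := by
        intro ha
        rw [ha, hb] at hab
        simp only [zero_smul, add_zero] at hab
        exact Units.ne_zero _ hab
      refine ⟨Units.mk0 a ha, ?_⟩
      apply Subtype.ext
      apply Subtype.ext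
      apply Subtype.ext
      apply Units.ext
      show (z (Units.mk0 a ha)).1 = y.1.1.1
      rw [hz, hab, hb]; simp
  have hst : Nat.card (MulAction.stabilizer (S.subgroupOf L)
      (QuotientGroup.mk g : L ⧸ S.subgroupOf L)) = Fintype.card F - 1 := by
    rw [← Nat.card_eq_of_bijective φ hbij, Nat.card_eq_fintype_card, Fintype.card_units]
  have hS' : Nat.card (S.subgroupOf L) = Fintype.card F ^ 2 - 1 := by
    rw [← hScard]
    exact Nat.card_congr (Subgroup.subgroupOfEquivOfLe hSL).toEquiv
  have hmul := Subgroup.card_mul_index (MulAction.stabilizer (S.subgroupOf L)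
      (QuotientGroup.mk g : L ⧸ S.subgroupOf L))
  rw [MulAction.index_stabilizer, hst, hS'] at hmul
  have hq : 1 < Fintype.card F := Fintype.one_lt_card
  apply Nat.eq_of_mul_eq_mul_left (show 0 < Fintype.card F - 1 by omega)
  rw [hmul]
  obtain ⟨r, hr⟩ : ∃ r, Fintype.card F = r + 1 := ⟨_, (Nat.sub_add_cancel hq.le).symm⟩
  rw [hr]
  simp only [Nat.add_sub_cancel]
  apply Nat.sub_eq_of_eq_add
  ring

lemma fixed_card (L S : Subgroup (GL (Fin 2) F)) (hSL : S ≤ L) (s : GL (Fin 2) F) (hs : s ∈ S)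
    (h1 : ∀ g ∈ S, ∃ a b : F, (g : Matrix (Fin 2) (Fin 2) F) = a • 1 + b • s.1)
    (h2 : ∀ a b : F, (a, b) ≠ 0 → ∃ g ∈ S, (g : Matrix (Fin 2) (Fin 2) F) = a • 1 + b • s.1) :
    Nat.card (MulAction.fixedPoints (S.subgroupOf L) (L ⧸ S.subgroupOf L)) ≤ 2 := by
  classical
  have hrep : ∀ x : MulAction.fixedPoints (S.subgroupOf L) (L ⧸ S.subgroupOf L),
      ∃ g : L, (QuotientGroup.mk g : L ⧸ S.subgroupOf L) = x.1 :=
    fun x => QuotientGroup.mk_surjective x.1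
  choose g hg using hrep
  have hfix : ∀ x, ∀ y ∈ S, (g x).1⁻¹ * y * (g x).1 ∈ S := by
    intro x y hy
    have := x.2 ⟨⟨y, hSL hy⟩, Subgroup.mem_subgroupOf.2 hy⟩
    rw [← hg x, smul_mk_iff] at this
    exact this
  let ρ : MulAction.fixedPoints (S.subgroupOf L) (L ⧸ S.subgroupOf L) → Bool :=
    fun x => decide ((g x).1⁻¹ * s * (g x).1 = s)
  have hρ : Function.Injective ρ := by
    intro x y hxy
    have hiff : ((g x).1⁻¹ * s * (g x).1 = s) ↔ ((g y).1⁻¹ * s * (g y).1 = s) := by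
      simpa [ρ] using hxy
    have heq : (g x).1⁻¹ * s * (g x).1 = (g y).1⁻¹ * s * (g y).1 := by
      by_cases hx : (g x).1⁻¹ * s * (g x).1 = s
      · rw [hx, hiff.1 hx]
      · apply Units.ext
        rw [conj_root S s hs h1 h2 _ (hfix x s hs) hx,
          conj_root S s hs h1 h2 _ (hfix y s hs) (fun h => hx (hiff.2 h))]
    have hc : ((g y).1 * (g x).1⁻¹) * s = s * ((g y).1 * (g x).1⁻¹) := by
      have e : (g y).1 * ((g x).1⁻¹ * s * (g x).1) * (g x).1⁻¹ =
        (g y).1 * ((g y).1⁻¹ * s * (g y).1) * (g x).1⁻¹ := by rw [heq]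
      simpa [mul_assoc] using e
    have hcS := centr S s h1 h2 _ hc
    have h3 := hfix x _ hcS
    apply Subtype.ext
    rw [← hg x, ← hg y]
    apply QuotientGroup.eq.2
    rw [Subgroup.mem_subgroupOf]
    simpa [mul_assoc] using h3
  have := Nat.card_le_card_of_injective ρ hρ
  simpa using this

end Stmt14

theorem stmt_14 (q : ℕ) (hq : IsPrimePow q)
    (F : Type) [Field F] [Fintype F] (hF : Fintype.card F = q)
    (L S : Subgroup (GL (Fin 2) F)) (hL : L ≠ ⊤)
    (hSL : S ≤ L) (hScyc : IsCyclic S) (hScard : Nat.card S = q ^ 2 - 1) :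
    (S.subgroupOf L).Normal ∧ (S.subgroupOf L).index ≤ 2 := by
  classical
  subst hF
  obtain ⟨s, hs, h1, h2⟩ := Stmt14.singer S hScyc hScard
  have hidx := Stmt14.index_eq L S hSL s h1 h2
  obtain ⟨u, m, hum, hu, hm, hmu⟩ := Stmt14.st_num (L ⊓ Stmt14.st) inf_le_right
  obtain ⟨t, ht⟩ := Stmt14.action_count (G := S.subgroupOf L) (X := L ⧸ S.subgroupOf L)
    (Fintype.card F + 1) (Stmt14.orbit_card L S hSL s hScard h1 h2)
  have hf2 := Stmt14.fixed_card L S hSL s hs h1 h2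
  have hf1 : 1 ≤ Nat.card (MulAction.fixedPoints (S.subgroupOf L) (L ⧸ S.subgroupOf L)) := by
    rw [Nat.one_le_iff_ne_zero, Nat.card_ne_zero]
    refine ⟨⟨⟨QuotientGroup.mk 1, ?_⟩⟩, inferInstance⟩
    intro y
    rw [Stmt14.smul_mk_iff]
    simpa using Subgroup.mem_subgroupOf.1 y.2
  have hq2 : 1 < Fintype.card F := Fintype.one_lt_card
  have hix : (S.subgroupOf L).index = Nat.card (L ⧸ S.subgroupOf L) := rfl
  rcases Stmt14.arith _ _ _ _ u m hq2 hf1 hf2 (hix.trans ht) (hidx.trans hum) hu hm hmu with h | h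
  · refine ⟨?_, h⟩
    have h0 : (S.subgroupOf L).index ≠ 0 := Subgroup.index_ne_zero_of_finite
    rcases (show (S.subgroupOf L).index = 1 ∨ (S.subgroupOf L).index = 2 by omega) with h' | h'
    · rw [Subgroup.index_eq_one.1 h']; infer_instance
    · exact Subgroup.normal_of_index_eq_two h'
  · exfalso
    apply hL
    apply Subgroup.eq_top_of_card_eq
    have hS' : Nat.card (S.subgroupOf L) = Fintype.card F ^ 2 - 1 := by
      rw [← hScard]
      exact Nat.card_congr (Subgroup.subgroupOfEquivOfLe hSL).toEquiv
    rw [← Subgroup.card_mul_index (S.subgroupOf L), h, hS', Matrix.card_GL_field,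
      Fin.prod_univ_two]
    simp [sq, Nat.mul_sub]
end
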